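/- Let k be an algebraically closed field whose characteristic is either 0 or greater than d^n. Let F_0, …, F_m ∈ k[X_0, …, X_n] be homogeneous polynomials of common degree d, with F_0 not identically zero, and fix i ∈ {0, …, min(m,n)}. Then there exist a nonzero polynomial F in the (n−i)(n+1) + i(m+1) variables L = (L_{j,t})_{1≤j≤n−i, 0≤t≤n} and L̂ = (L̂_{j,t})_{1≤j≤i, 0≤t≤m}, of total degree at most (m+n+1)·2^n·(d+1)^{m+1}, and a non-negative integer g_i, such that for every choice of scalars ℓ ∈ k^{(n−i)×(n+1)} and ℓ̂ ∈ k^{i×(m+1)} with F(ℓ, ℓ̂) ≠ 0, the set of points x ∈ ℙ^n(k) satisfying ℓ_{j,0}x_0 + ⋯ + ℓ_{j,n}x_n = 0 for j = 1, …, n−i, ℓ̂_{j,0}F_0(x) + ⋯ + ℓ̂_{j,m}F_m(x) = 0 for j = 1, …, i, and x ∉ V(F_0, …, F_m), is finite with exactly g_i elements, and moreover every such point x satisfies x_0 ≠ 0. -/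

import Mathlib

/-!
Read the conditions on `x` as a system of equations whose coefficients `ℓ`, `ℓ̂` are indeterminates.
Each equation is linear in a coefficient of its own, its pivot, whose cofactor is `X 0` or `F 0`.
Solving for the pivots gives a generic solution, at which the coordinates of `x` and the other
coefficients are independent indeterminates.

Over the ring of coefficients, every polynomial in `x` satisfies at the generic solution an
equation whose degree is at most the product of the degrees of the system. It is obtained by
elimination. By counting dimensions, the forms of a generic overdetermined system are algebraically
dependent, and this yields a relation among its coefficients. The coefficients at hand are not
generic, but they become so after a perturbation, and the part of lowest order of the perturbed
relation is the desired equation.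

As the degree of these equations is at most `d ^ i`, and thus below any positive characteristic, the
coordinates are separable over the coefficients and the Jacobian determinant does not vanish at the
generic solution. Away from the zeros of the leading coefficients of the equations for the
coordinates, and of the constant coefficient of the equation for the Jacobian times the product of
the pivot cofactors, the solutions form a finite étale cover of the space of coefficients. This
space is irreducible, so the number of solutions is constant. There are no solutions with
`x 0 = 0`, because the leading coefficients of the homogenized equations do not vanish.
-/

section MonomialCount

open MvPolynomial Finset

lemma ncard_degree_le_le_pow (σ : Type*) [Fintype σ] (N : ℕ) :
    {α : σ →₀ ℕ | α.degree ≤ N}.ncard ≤ (N + 1) ^ Fintype.card σ := by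
  classical
  have hcard : (Fintype.piFinset fun _ : σ => range (N + 1)).card = (N + 1) ^ Fintype.card σ := by
    simp
  rw [← hcard, ← Set.ncard_coe_finset]
  refine Set.ncard_le_ncard_of_injOn (fun α => ⇑α) (fun α hα => ?_) DFunLike.coe_injective.injOn
  simpa [Nat.lt_succ_iff] using fun l => (Finsupp.le_degree l α).trans hα

lemma ncard_degree_le_le_ncard_weight_le_mul_prod {σ : Type*} [Fintype σ] {D : σ → ℕ}
    (hD : ∀ l, D l ≠ 0) (N : ℕ) :
    {α : σ →₀ ℕ | α.degree ≤ N}.ncard ≤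
      {α : σ →₀ ℕ | Finsupp.weight D α ≤ N}.ncard * ∏ l, D l := by
  classical
  have hprod : ∏ l, D l = (Fintype.piFinset fun l => range (D l) : Set (σ → ℕ)).ncard := by
    rw [Set.ncard_coe_finset]; simp
  rw [hprod, ← Set.ncard_prod]
  refine Set.ncard_le_ncard_of_injOn
    (fun β => (Finsupp.equivFunOnFinite.symm fun l => β l / D l, fun l => β l % D l))
    (fun β hβ => ⟨?_, ?_⟩) (fun β _ γ _ h => ?_)
    ((Finsupp.finite_of_nat_weight_le D hD N).prod (finite_toSet _))
  · refine le_trans ?_ (Set.mem_ofPred.1 hβ)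
    rw [Finsupp.weight_apply, Finsupp.sum_fintype _ _ (by simp), Finsupp.degree_eq_sum]
    exact sum_le_sum fun l _ => Nat.div_mul_le_self (β l) (D l)
  · simpa using fun l => Nat.mod_lt _ (Nat.pos_of_ne_zero (hD l))
  · rw [Prod.mk.injEq, EmbeddingLike.apply_eq_iff_eq] at h
    ext l
    rw [← Nat.div_add_mod (β l) (D l), congrFun h.1 l, congrFun h.2 l, Nat.div_add_mod]

lemma exists_mul_shift_lt_of_le_pow {W : ℕ → ℕ} {n : ℕ} (hW : ∀ N, W N ≤ (N + 1) ^ n)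
    (hW0 : 1 ≤ W 0) {δ : ℕ} (hδ : 1 ≤ δ) (c : ℕ) : ∃ N, δ * W (N + c) < (δ + 1) * W N := by
  by_contra! hgrowth
  have hδ' : (0 : ℝ) < δ := by exact_mod_cast hδ
  set r : ℝ := (δ + 1) / δ with hr
  have hr1 : 1 < r := by rw [hr, lt_div_iff₀ hδ']; linarith
  have hgeom : ∀ t : ℕ, r ^ t ≤ W (t * c) := fun t => by
    induction t with
    | zero => simpa using hW0
    | succ t ih =>
      have hstep : r * W (t * c) ≤ W (t * c + c) := by
        rw [hr, div_mul_eq_mul_div, div_le_iff₀ hδ', mul_comm (W _ : ℝ)]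
        exact_mod_cast hgrowth (t * c)
      rw [Nat.succ_mul, pow_succ']
      exact (mul_le_mul_of_nonneg_left ih (by positivity)).trans hstep
  have hlim := (tendsto_pow_const_div_const_pow_of_one_lt n hr1).eventually
    (gt_mem_nhds (by positivity : (0 : ℝ) < 1 / (c + 1 : ℝ) ^ n))
  obtain ⟨t, ht, ht1⟩ := (hlim.and (Filter.eventually_ge_atTop 1)).exists
  have hpoly : (W (t * c) : ℝ) ≤ (t : ℝ) ^ n * (c + 1 : ℝ) ^ n := by
    rw [← mul_pow]
    exact_mod_cast (hW (t * c)).trans (Nat.pow_le_pow_left (by nlinarith) n)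
  rw [div_lt_div_iff₀ (by positivity) (by positivity)] at ht
  linarith [hgeom t]

lemma exists_ncard_degree_le_lt_mul_ncard_weight_le {σ : Type*} [Fintype σ] {D : σ → ℕ}
    (hD : ∀ l, D l ≠ 0) (c : ℕ) :
    ∃ N, {α : σ →₀ ℕ | α.degree ≤ N + c}.ncard <
      (∏ l, D l + 1) * {α : σ →₀ ℕ | Finsupp.weight D α ≤ N}.ncard := by
  have hfin : {α : σ →₀ ℕ | α.degree ≤ 0}.Finite := by
    simp [Finsupp.degree_eq_zero_iff]
  have hone : 1 ≤ {α : σ →₀ ℕ | α.degree ≤ 0}.ncard :=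
    (Set.ncard_pos hfin).2 ⟨0, by simp⟩
  have hδ : 1 ≤ ∏ l, D l := Nat.one_le_iff_ne_zero.2 (prod_ne_zero_iff.2 fun l _ => hD l)
  obtain ⟨N, hN⟩ := exists_mul_shift_lt_of_le_pow (ncard_degree_le_le_pow σ) hone hδ c
  refine ⟨N, lt_of_mul_lt_mul_left (hN.trans_le ?_) (Nat.zero_le (∏ l, D l))⟩
  rw [mul_left_comm, mul_comm (∏ l, D l)]
  exact Nat.mul_le_mul_left _ (ncard_degree_le_le_ncard_weight_le_mul_prod hD N)

lemma ncard_degree_le_congr {σ ι : Type*} (e : σ ≃ ι) (N : ℕ) :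
    {α : σ →₀ ℕ | α.degree ≤ N}.ncard = {α : ι →₀ ℕ | α.degree ≤ N}.ncard :=
  Nat.card_congr <| (Finsupp.domCongr e).toEquiv.subtypeEquiv fun α => by
    change α.degree ≤ N ↔ (Finsupp.equivMapDomain e α).degree ≤ N
    rw [Finsupp.equivMapDomain_eq_mapDomain, Finsupp.degree_mapDomain]

variable {A σ : Type*} [CommRing A]

lemma exists_sum_smul_eq_zero_of_ncard_degree_le_lt [Nontrivial A] [Finite σ] {κ : Type*}
    [Fintype κ] {N : ℕ} {w : κ → MvPolynomial σ A} (hw : ∀ i, (w i).totalDegree ≤ N)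
    (hcard : {α : σ →₀ ℕ | α.degree ≤ N}.ncard < Fintype.card κ) :
    ∃ a : κ → A, a ≠ 0 ∧ ∑ i, a i • w i = 0 := by
  have hrank : Module.finrank A (restrictTotalDegree σ A N) = {α : σ →₀ ℕ | α.degree ≤ N}.ncard :=
    Module.finrank_eq_nat_card_basis (basisRestrictSupport A _)
  let w' : κ → restrictTotalDegree σ A N := fun i => ⟨w i, (mem_restrictTotalDegree ..).2 (hw i)⟩
  have hdep : ¬ LinearIndependent A w' := fun hind =>
    hcard.not_ge (hrank ▸ hind.fintype_card_le_finrank)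
  obtain ⟨a, hsum, i, hi⟩ := Fintype.not_linearIndependent_iff.1 hdep
  refine ⟨a, fun h => hi (congrFun h i), ?_⟩
  simpa [w'] using congrArg Subtype.val hsum

variable {ι : Type*}

lemma totalDegree_aeval_monomial_one_le {D : ι → ℕ} {f : ι → MvPolynomial σ A}
    (hf : ∀ l, (f l).totalDegree ≤ D l) (α : ι →₀ ℕ) :
    (aeval f (monomial α (1 : A))).totalDegree ≤ Finsupp.weight D α := by
  rw [aeval_monomial, map_one, one_mul, Finsupp.weight_apply]
  refine (totalDegree_finsetProd _ _).trans (sum_le_sum fun l _ => ?_)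
  exact (totalDegree_pow _ _).trans (Nat.mul_le_mul_left _ (hf l))

lemma totalDegree_pow_mul_pow_le {u v : MvPolynomial σ A} {e : ℕ} (hu : u.totalDegree ≤ e)
    (hv : v.totalDegree ≤ e) {i δ : ℕ} (hi : i ≤ δ) :
    (u ^ i * v ^ (δ - i)).totalDegree ≤ e * δ :=
  calc (u ^ i * v ^ (δ - i)).totalDegree ≤ i * e + (δ - i) * e :=
        (totalDegree_mul _ _).trans <| add_le_add
          ((totalDegree_pow _ _).trans (Nat.mul_le_mul_left _ hu))
          ((totalDegree_pow _ _).trans (Nat.mul_le_mul_left _ hv))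
    _ = e * δ := by rw [← add_mul, Nat.add_sub_cancel' hi, mul_comm]

theorem exists_polynomial_relation [Nontrivial A] [Fintype σ]
    [Fintype ι] (hcard : Fintype.card σ = Fintype.card ι) {D : ι → ℕ} (hD : ∀ l, D l ≠ 0)
    {f : ι → MvPolynomial σ A} (hf : ∀ l, (f l).totalDegree ≤ D l) {e : ℕ}
    {u v : MvPolynomial σ A} (hu : u.totalDegree ≤ e) (hv : v.totalDegree ≤ e) :
    ∃ r : Polynomial (MvPolynomial ι A), r ≠ 0 ∧ r.natDegree ≤ ∏ l, D l ∧
      ∑ i ∈ range (∏ l, D l + 1), aeval f (r.coeff i) * (u ^ i * v ^ (∏ l, D l - i)) = 0 := by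
  classical
  set δ := ∏ l, D l
  obtain ⟨N, hN⟩ := exists_ncard_degree_le_lt_mul_ncard_weight_le hD (e * δ)
  let S := {α : ι →₀ ℕ | Finsupp.weight D α ≤ N}
  have : Fintype S := (Finsupp.finite_of_nat_weight_le D hD N).fintype
  let w : Fin (δ + 1) × S → MvPolynomial σ A := fun i =>
    aeval f (monomial i.2.1 (1 : A)) * (u ^ (i.1 : ℕ) * v ^ (δ - i.1))
  have hw : ∀ i, (w i).totalDegree ≤ N + e * δ := fun i =>
    (totalDegree_mul _ _).trans <| add_le_add
      ((totalDegree_aeval_monomial_one_le hf _).trans i.2.2)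
      (totalDegree_pow_mul_pow_le hu hv (Nat.lt_succ_iff.1 i.1.2))
  have hSN : Fintype.card S = {α : ι →₀ ℕ | Finsupp.weight D α ≤ N}.ncard :=
    Fintype.card_eq_nat_card
  obtain ⟨a, ha, hsum⟩ := exists_sum_smul_eq_zero_of_ncard_degree_le_lt hw <| by
    rwa [Fintype.card_prod, Fintype.card_fin, hSN,
      ncard_degree_le_congr (Fintype.equivOfCardEq hcard)]
  let r : Polynomial (MvPolynomial ι A) :=
    ∑ i : Fin (δ + 1), Polynomial.monomial i (∑ α : S, monomial α.1 (a (i, α)))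
  have hcoeff : ∀ i : Fin (δ + 1), r.coeff i = ∑ α : S, monomial α.1 (a (i, α)) := fun i => by
    simp [r, Polynomial.finsetSum_coeff, Polynomial.coeff_monomial, Fin.val_inj]
  refine ⟨r, fun hr => ha (funext fun ⟨i, α⟩ => ?_), ?_, ?_⟩
  · have hα := congrArg (coeff α.1) (hcoeff i)
    simpa [hr, coeff_sum, coeff_monomial, Subtype.val_inj] using hα.symm
  · exact Polynomial.natDegree_sum_le_of_forall_le _ _ fun i _ =>
      (Polynomial.natDegree_monomial_le _).trans (Nat.lt_succ_iff.1 i.2)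
  · rw [sum_range, ← hsum, Fintype.sum_prod_type]
    refine sum_congr rfl fun i _ => ?_
    simp only [hcoeff, map_sum, sum_mul, w]
    refine sum_congr rfl fun α _ => ?_
    rw [← smul_mul_assoc, ← map_smul, smul_monomial, smul_eq_mul, mul_one]

end MonomialCount

section LowestOrder

open MvPolynomial

lemma exists_coeff_ne_zero_of_eval₂_eq_zero {Q E C : Type*} [CommRing Q] [CommRing E]
    {Ψ : Q →+* MvPolynomial C E} {r : MvPolynomial C Q} (hr : r ≠ 0) (hr0 : eval₂ Ψ X r = 0) :
    ∃ α, coeff α r ≠ 0 ∧ constantCoeff (Ψ (coeff α r)) = 0 := by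
  classical
  obtain ⟨α, hα, hmin⟩ := r.support.exists_min_image (fun β => β.degree) (support_nonempty.2 hr)
  refine ⟨α, mem_support_iff.1 hα, ?_⟩
  have hterm : ∀ β, ∏ i ∈ β.support, (X i : MvPolynomial C E) ^ β i = monomial β 1 := fun β => by
    rw [monomial_eq, C_1, one_mul, Finsupp.prod]
  have hcoeff := congrArg (coeff α) hr0
  rw [eval₂_eq, coeff_sum, coeff_zero, Finset.sum_eq_single_of_mem α hα] at hcoeff
  · rwa [hterm, coeff_mul_monomial', if_pos le_rfl, tsub_self, mul_one] at hcoeff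
  · intro β hβ hne
    rw [hterm, coeff_mul_monomial', if_neg]
    intro hle
    obtain ⟨γ, rfl⟩ := exists_add_of_le hle
    have hγ : γ = 0 := (Finsupp.degree_eq_zero_iff γ).1 (by
      have := hmin β hβ
      rw [map_add] at this
      lia)
    exact hne (by rw [hγ, add_zero])

theorem algebraicIndependent_sumElim_of_constantCoeff {k E ι C : Type*} [CommRing k] [CommRing E]
    [Algebra k E] {f : ι → MvPolynomial C E} (c : C → k)
    (hf : AlgebraicIndependent k fun i => constantCoeff (f i)) :
    AlgebraicIndependent k
      (Sum.elim f fun i => X i + MvPolynomial.C (algebraMap k E (c i))) := by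
  rw [algebraicIndependent_iff]
  intro p hp
  let θ : MvPolynomial (ι ⊕ C) k →ₐ[k] MvPolynomial C (MvPolynomial ι k) :=
    aeval (Sum.elim (fun i => MvPolynomial.C (X i)) fun i =>
      X i + MvPolynomial.C (MvPolynomial.C (c i)))
  let θinv : MvPolynomial C (MvPolynomial ι k) →ₐ[k] MvPolynomial (ι ⊕ C) k :=
    aevalTower (aeval fun i => X (Sum.inl i)) fun i => X (Sum.inr i) - MvPolynomial.C (c i)
  have hinv : θinv.comp θ = AlgHom.id k _ := by
    ext i
    rcases i with i | i <;> simp [θ, θinv]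
  let ev : MvPolynomial C (MvPolynomial ι k) →ₐ[k] MvPolynomial C E := aevalTower (aeval f) X
  have hev : ev.comp θ =
      aeval (Sum.elim f fun i => X i + MvPolynomial.C (algebraMap k E (c i))) := by
    ext i
    rcases i with i | i <;> simp [θ, ev]
  by_contra hp0
  obtain ⟨α, hα, hα0⟩ := exists_coeff_ne_zero_of_eval₂_eq_zero
    (Ψ := (aeval f : MvPolynomial ι k →ₐ[k] MvPolynomial C E).toRingHom) (r := θ p)
    (fun h => hp0 (by simpa [h] using (DFunLike.congr_fun hinv p).symm))
    ((DFunLike.congr_fun hev p).trans hp)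
  refine hα (algebraicIndependent_iff.1 hf _ ?_)
  refine Eq.trans ?_ hα0
  rw [AlgHom.toRingHom_eq_coe, RingHom.coe_coe, map_aeval, aeval_def, coe_eval₂Hom,
    show constantCoeff.comp (algebraMap k (MvPolynomial C E)) = algebraMap k E from
      RingHom.ext fun a => constantCoeff_C C (algebraMap k E a)]

end LowestOrder

section PrincipalPrime

open Polynomial

lemma exists_mul_add_mul_eq_C_of_isCoprime_map {A : Type*} (K : Type*) [CommRing A] [IsDomain A]
    [Field K] [Algebra A K] [IsFractionRing A K] {p q : A[X]}
    (h : IsCoprime (p.map (algebraMap A K)) (q.map (algebraMap A K))) :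
    ∃ a b : A[X], ∃ c ≠ 0, a * p + b * q = C c := by
  obtain ⟨a, b, hab⟩ := h
  obtain ⟨s, hs, hs'⟩ := IsLocalization.integerNormalization_spec (nonZeroDivisors A) a
  obtain ⟨t, ht, ht'⟩ := IsLocalization.integerNormalization_spec (nonZeroDivisors A) b
  refine ⟨C t * IsLocalization.integerNormalization (nonZeroDivisors A) a,
    C s * IsLocalization.integerNormalization (nonZeroDivisors A) b, s * t,
    mul_ne_zero (nonZeroDivisors.ne_zero hs) (nonZeroDivisors.ne_zero ht), ?_⟩
  apply Polynomial.map_injective (algebraMap A K) (IsFractionRing.injective A K)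
  simp only [Polynomial.map_add, Polynomial.map_mul, Polynomial.map_C, hs', ht', map_mul]
  rw [← algebraMap_smul K s a, ← algebraMap_smul K t b, smul_eq_C_mul, smul_eq_C_mul]
  linear_combination (C (algebraMap A K s) * C (algebraMap A K t)) * hab

variable {A : Type*} [CommRing A] [IsDomain A] [UniqueFactorizationMonoid A]

theorem isPrincipal_of_isPrime_of_comap_C_eq_bot {I : Ideal A[X]} [hI : I.IsPrime]
    (hIA : I.comap C = ⊥) : I.IsPrincipal := by
  rcases eq_or_ne I ⊥ with rfl | hne
  · infer_instance
  have hC : ∀ a, C a ∈ I → a = 0 := fun a ha => by rwa [← Ideal.mem_comap, hIA] at ha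
  obtain ⟨q, hq, hqp⟩ := hI.exists_mem_prime_of_ne_bot hne
  refine ⟨q, le_antisymm (fun f hf => Ideal.mem_span_singleton.2 ?_)
    ((Ideal.span_singleton_le_iff_mem I).2 hq)⟩
  have hdeg : q.natDegree ≠ 0 := fun hdeg => by
    obtain ⟨a, rfl⟩ := natDegree_eq_zero.1 hdeg
    exact hqp.ne_zero (by rw [hC a hq, C_0])
  have hprim := hqp.irreducible.isPrimitive hdeg
  let _ : NormalizedGCDMonoid A := Classical.choice inferInstance
  have hirr := (hprim.irreducible_iff_irreducible_map_fraction_map (K := FractionRing A)).1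
    hqp.irreducible
  rw [hprim.dvd_iff_fraction_map_dvd_fraction_map (FractionRing A)]
  by_contra hndvd
  obtain ⟨a, b, c, hc, habc⟩ := exists_mul_add_mul_eq_C_of_isCoprime_map _
    (hirr.coprime_iff_not_dvd.2 hndvd)
  exact hc (hC c (habc ▸ I.add_mem (I.mul_mem_left a hq) (I.mul_mem_left b hf)))

theorem isPrincipal_of_isPrime_of_comap_rename_eq_bot {k σ : Type*} [Field k] (v : σ)
    {I : Ideal (MvPolynomial σ k)} [I.IsPrime]
    (hI : I.comap (MvPolynomial.rename (Subtype.val : {w // w ≠ v} → σ)) = ⊥) :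
    I.IsPrincipal := by
  classical
  let e : MvPolynomial σ k ≃ₐ[k] (MvPolynomial {w // w ≠ v} k)[X] :=
    (MvPolynomial.renameEquiv k (Equiv.optionSubtypeNe v).symm).trans
      (MvPolynomial.optionEquivLeft k _)
  have he : ∀ a, e.symm (C a) = MvPolynomial.rename Subtype.val a := fun a => by
    rw [AlgEquiv.symm_apply_eq]
    exact DFunLike.congr_fun (f := IsScalarTower.toAlgHom k _ (MvPolynomial {w // w ≠ v} k)[X])
      (g := (e : MvPolynomial σ k →ₐ[k] _).comp (MvPolynomial.rename Subtype.val))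
      (MvPolynomial.algHom_ext fun w => by simp [e, w.2]) a
  have hprime : (I.comap e.symm).IsPrime := Ideal.comap_isPrime _ _
  have hprincipal := isPrincipal_of_isPrime_of_comap_C_eq_bot (I := I.comap e.symm) <| by
    ext a
    rw [← hI, Ideal.mem_comap, Ideal.mem_comap, Ideal.mem_comap, he]
  exact Ideal.IsPrincipal.of_comap e.symm e.symm.surjective I

end PrincipalPrime

section Elimination

open MvPolynomial

lemma aevalTower_aeval_map_C {k B υ σ : Type*} [CommSemiring k] [CommSemiring B] [Algebra k B]
    (c : υ → B) (x : σ → B) (φ : MvPolynomial σ k) :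
    aevalTower (aeval c : MvPolynomial υ k →ₐ[k] B) x (map C φ) = aeval x φ := by
  have h : (aevalTower (aeval c : MvPolynomial υ k →ₐ[k] B) x).comp
      (mapAlgHom (Algebra.ofId k (MvPolynomial υ k))) = aeval x := by ext; simp
  exact DFunLike.congr_fun h φ

lemma totalDegree_map_le {R S σ : Type*} [CommSemiring R] [CommSemiring S] (f : R →+* S)
    (p : MvPolynomial σ R) : (map f p).totalDegree ≤ p.totalDegree :=
  Finset.sup_mono (support_map_subset f p)

lemma totalDegree_C_mul_map_le {R S σ : Type*} [CommSemiring R] [CommSemiring S] (f : R →+* S)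
    (c : S) (p : MvPolynomial σ R) : (C c * map f p).totalDegree ≤ p.totalDegree :=
  (totalDegree_mul _ _).trans <| by
    rw [totalDegree_C, zero_add]; exact totalDegree_map_le f p

variable {k ι σ τ : Type*} [Field k] [Fintype τ]

/-- The linear combination `∑ t, c (l, t) * Φ l t` of the polynomials in row `l`, with
indeterminate coefficients `c (l, t)`. -/
noncomputable def genericForm (Φ : ι → τ → MvPolynomial σ k) (l : ι) :
    MvPolynomial σ (MvPolynomial (ι × τ) k) :=
  ∑ t, C (X (l, t)) * map C (Φ l t)

/-- The homomorphism whose kernel is the ideal of relations between the coefficients of forms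
`c (l, none) + ∑ t, c (l, some t) * Φ l t` having a common zero: the indeterminate `X (l, none)`,
which stands for the constant term of row `l`, is sent to the value that makes the generic
point `x` a zero of that row. -/
noncomputable def eliminationHom (Φ : ι → τ → MvPolynomial σ k) :
    MvPolynomial (ι × Option τ) k →ₐ[k] MvPolynomial σ (MvPolynomial (ι × τ) k) :=
  aeval fun v => v.2.elim (-genericForm Φ v.1) fun t => C (X (v.1, t))

variable {Φ : ι → τ → MvPolynomial σ k}

@[simp]
lemma eliminationHom_X_none (l : ι) :
    eliminationHom Φ (X (l, none)) = -genericForm Φ l := by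
  simp [eliminationHom]

@[simp]
lemma eliminationHom_X_some (l : ι) (t : τ) :
    eliminationHom Φ (X (l, some t)) = C (X (l, t)) := by
  simp [eliminationHom]

@[simp]
lemma eliminationHom_C (a : k) : eliminationHom Φ (C a) = C (C a) :=
  (eliminationHom Φ).commutes a

lemma totalDegree_genericForm_le {d : ℕ} {l : ι} (hΦ : ∀ t, (Φ l t).totalDegree ≤ d) :
    (genericForm Φ l).totalDegree ≤ d :=
  totalDegree_finsetSum_le fun t _ => (totalDegree_C_mul_map_le _ _ _).trans (hΦ t)

lemma aeval_eq_zero_of_eliminationHom_eq_zero {B : Type*} [CommRing B] [Algebra k B]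
    {c : ι × Option τ → B} {x : σ → B}
    (h : ∀ l, ∑ t, c (l, some t) * aeval x (Φ l t) + c (l, none) = 0)
    {R : MvPolynomial (ι × Option τ) k} (hR : eliminationHom Φ R = 0) : aeval c R = 0 := by
  let ev : MvPolynomial σ (MvPolynomial (ι × τ) k) →ₐ[k] B :=
    aevalTower (aeval fun p => c (p.1, some p.2)) x
  have hev : ev.comp (eliminationHom Φ) = aeval c := by
    ext ⟨l, o⟩
    cases o with
    | some t => simp [ev]
    | none =>
      have hform : ev (genericForm Φ l) = ∑ t, c (l, some t) * aeval x (Φ l t) := by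
        simp [ev, genericForm, aevalTower_aeval_map_C]
      simp only [AlgHom.comp_apply, eliminationHom_X_none, map_neg, hform, aeval_X]
      linear_combination -h l
  rw [← hev, AlgHom.comp_apply, hR, map_zero]

end Elimination

section Independence

open MvPolynomial

variable {k σ τ : Type*} [Field k] [Fintype τ] {Φ : Option σ → τ → MvPolynomial σ k}
  {D : σ → ℕ} {star : σ → τ}

open Classical in
/-- The coefficients of the system consisting of the polynomials `Φ (some s) (star s)`. -/
noncomputable def starCoeff (k : Type*) [Field k] (star : σ → τ) (p : Option σ × τ) : k :=
  p.1.elim 0 fun s => if p.2 = star s then 1 else 0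

/-- The exchange of variables `k[c][x] → k[x][c]`, followed by the translation of the
coefficients `c` that moves the origin to the system `starCoeff`. -/
noncomputable def recenterAtStar (k : Type*) [Field k] (star : σ → τ) :
    MvPolynomial σ (MvPolynomial (Option σ × τ) k) →ₐ[k]
      MvPolynomial (Option σ × τ) (MvPolynomial σ k) :=
  aevalTower (aeval fun p => X p + C (algebraMap k _ (starCoeff k star p))) fun s => C (X s)

lemma constantCoeff_recenterAtStar_genericForm (s : σ) :
    constantCoeff (recenterAtStar k star (genericForm Φ (some s))) = Φ (some s) (star s) := by
  have hC : ∀ φ : MvPolynomial σ k,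
      constantCoeff (recenterAtStar k star (map C φ)) = φ := fun φ => by
    rw [recenterAtStar, aevalTower_aeval_map_C]
    induction φ using MvPolynomial.induction_on <;> simp_all [algebraMap_eq]
  simp only [genericForm, map_sum, map_mul, hC]
  rw [Finset.sum_eq_single (star s)] <;>
    simp +contextual [recenterAtStar, starCoeff]

theorem algebraicIndependent_eliminationHom_X (hD : ∀ s, D s ≠ 0)
    (hstar : ∀ s, Φ (some s) (star s) = X s ^ D s) :
    AlgebraicIndependent k fun v : {v : Option σ × Option τ // v ≠ (none, none)} =>
      eliminationHom Φ (X v.1) := by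
  have hpow : AlgebraicIndependent k fun s => (-X s ^ D s : MvPolynomial σ k) := by
    convert! algebraicIndependent_polynomial_aeval_X (fun s => -(Polynomial.X : Polynomial k) ^ D s)
      (fun s => Polynomial.transcendental _ (by simp [hD]) (by simp)) using 2
    simp
  let y : σ ⊕ (Option σ × τ) → MvPolynomial (Option σ × τ) (MvPolynomial σ k) :=
    Sum.elim (fun s => recenterAtStar k star (-genericForm Φ (some s)))
      fun p => X p + C (algebraMap k (MvPolynomial σ k) (starCoeff k star p))
  have hy : AlgebraicIndependent k y := algebraicIndependent_sumElim_of_constantCoeff _ <| by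
    simpa only [map_neg, constantCoeff_recenterAtStar_genericForm, hstar] using hpow
  let split : {v : Option σ × Option τ // v ≠ (none, none)} → σ ⊕ (Option σ × τ)
    | ⟨(l, some t), _⟩ => Sum.inr (l, t)
    | ⟨(some s, none), _⟩ => Sum.inl s
  have hsplit : split.Injective := by
    rintro ⟨⟨_ | s, _ | t⟩, hv⟩ ⟨⟨_ | s', _ | t'⟩, hv'⟩ h <;>
      first
      | exact absurd rfl hv
      | exact absurd rfl hv'
      | cases h; rfl
      | cases h
  have hcomp : ∀ v, recenterAtStar k star (eliminationHom Φ (X v.1)) = y (split v) := by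
    rintro ⟨⟨_ | s, _ | t⟩, hv⟩
    · exact absurd rfl hv
    · simp [split, y, recenterAtStar]
    · simp [split, y]
    · simp [split, y, recenterAtStar]
  refine AlgebraicIndependent.of_comp (recenterAtStar k star) ?_
  rw [show _ ∘ _ = y ∘ split from _root_.funext hcomp]
  exact hy.comp split hsplit

lemma comap_rename_ker_eliminationHom (hD : ∀ s, D s ≠ 0)
    (hstar : ∀ s, Φ (some s) (star s) = X s ^ D s) :
    (RingHom.ker (eliminationHom Φ)).comap
      (rename (Subtype.val : {v : Option σ × Option τ // v ≠ (none, none)} → _)) = ⊥ := by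
  have hcomp : (eliminationHom Φ).comp (rename Subtype.val) =
      aeval fun v : {v : Option σ × Option τ // v ≠ (none, none)} => eliminationHom Φ (X v.1) := by
    ext; simp
  refine eq_bot_iff.2 fun a ha =>
    (algebraicIndependent_eliminationHom_X hD hstar).eq_zero_of_aeval_eq_zero a ?_
  rwa [← hcomp]

end Independence

section RowDegree

open MvPolynomial

lemma exists_eval_ne_zero {R σ : Type*} [CommRing R] [IsDomain R] [Infinite R]
    {f : MvPolynomial σ R} (hf : f ≠ 0) : ∃ z, eval z f ≠ 0 := by
  by_contra! h
  exact hf (MvPolynomial.funext fun z => by rw [h z, map_zero])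

lemma coeff_aeval_monomial_eq_eval_weightedHomogeneousComponent {R σ : Type*} [CommSemiring R]
    (w : σ → ℕ) (z : σ → R) (q : MvPolynomial σ R) (N : ℕ) :
    (aeval (fun v => Polynomial.monomial (w v) (z v)) q).coeff N =
      eval z (weightedHomogeneousComponent w N q) := by
  classical
  have hmon : ∀ m : σ →₀ ℕ, m.prod (fun v e => Polynomial.monomial (w v) (z v) ^ e) =
      Polynomial.monomial (Finsupp.weight w m) (m.prod fun v e => z v ^ e) := fun m => by
    simp only [Finsupp.prod, Finsupp.weight_apply, Finsupp.sum, smul_eq_mul,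
      ← Polynomial.C_mul_X_pow_eq_monomial, map_prod, map_pow, mul_pow, ← pow_mul,
      Finset.prod_mul_distrib, Finset.prod_pow_eq_pow_sum, mul_comm (w _)]
  induction q using MvPolynomial.induction_on' with
  | monomial m c =>
    rw [aeval_monomial, hmon, Polynomial.algebraMap_eq, Polynomial.coeff_C_mul,
      Polynomial.coeff_monomial]
    by_cases hm : Finsupp.weight w m = N
    · rw [if_pos hm, weightedHomogeneousComponent_of_mem
        (isWeightedHomogeneous_monomial w m c hm), if_pos rfl, eval_monomial]
    · rw [if_neg hm, weightedHomogeneousComponent_of_mem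
        (isWeightedHomogeneous_monomial w m c rfl), if_neg (Ne.symm hm), map_zero, mul_zero]
  | add p q hp hq => simp [hp, hq]

lemma weightedHomogeneousComponent_weightedTotalDegree_ne_zero {R σ : Type*} [CommSemiring R]
    (w : σ → ℕ) {q : MvPolynomial σ R} (hq : q ≠ 0) :
    weightedHomogeneousComponent w (weightedTotalDegree w q) q ≠ 0 := by
  obtain ⟨m, hm, hmax⟩ := q.support.exists_mem_eq_sup (support_nonempty.2 hq) (Finsupp.weight w)
  refine ne_zero_iff.2 ⟨m, ?_⟩
  rw [coeff_weightedHomogeneousComponent, weightedTotalDegree, if_pos hmax.symm]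
  exact mem_support_iff.1 hm

/-- A sufficiently general line through the origin sees the full weighted degree. -/
lemma exists_eval_ne_zero_weightedTotalDegree_le {R σ : Type*}
    [CommRing R] [IsDomain R] [Infinite R]
    (w : σ → ℕ) {q f : MvPolynomial σ R} (hq : q ≠ 0) (hf : f ≠ 0) :
    ∃ z, eval z f ≠ 0 ∧
      weightedTotalDegree w q ≤ (aeval (fun v => Polynomial.monomial (w v) (z v)) q).natDegree := by
  obtain ⟨z, hz⟩ := exists_eval_ne_zero
    (mul_ne_zero (weightedHomogeneousComponent_weightedTotalDegree_ne_zero w hq) hf)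
  rw [map_mul] at hz
  refine ⟨z, right_ne_zero_of_mul hz, Polynomial.le_natDegree_of_ne_zero ?_⟩
  rw [coeff_aeval_monomial_eq_eval_weightedHomogeneousComponent]
  exact left_ne_zero_of_mul hz

open Classical in
/-- The weight on the coefficients of a system that counts the degree in row `j`. -/
noncomputable def rowWeight {ι τ : Type*} (j : ι) (v : ι × τ) : ℕ := if v.1 = j then 1 else 0

variable {k ι σ τ : Type*} [Field k] {Φ : ι → τ → MvPolynomial σ k} {j : ι}

open Classical in
/-- The parametrisation of the systems by lines along which row `j` moves in the direction `a`:
the parameter `T` is the constant term of row `j` divided by `a none`, the variables `c (l, t)` are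
the coefficients of the point of the line with `T = 0`, and the variables indexed by
`{l // l ≠ j}` are the constant terms of the other rows. -/
noncomputable def ofRowLine (j : ι) (a : Option τ → k) :
    Polynomial (MvPolynomial {l // l ≠ j} (MvPolynomial (ι × τ) k)) →+*
      MvPolynomial (ι × Option τ) k :=
  Polynomial.eval₂RingHom
    (eval₂Hom
      (eval₂Hom C fun p => X (p.1, some p.2) -
        if p.1 = j then C (a (some p.2) / a none) * X (j, none) else 0)
      fun l => X (l.1, none))
    (C (a none)⁻¹ * X (j, none))

open Classical in
/-- The left inverse of `ofRowLine`. -/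
noncomputable def toRowLine (j : ι) (a : Option τ → k) :
    MvPolynomial (ι × Option τ) k →+*
      Polynomial (MvPolynomial {l // l ≠ j} (MvPolynomial (ι × τ) k)) :=
  eval₂Hom (Polynomial.C.comp (C.comp C)) fun v => v.2.elim
    (if hl : v.1 = j then Polynomial.C (C (C (a none))) * Polynomial.X
      else Polynomial.C (X ⟨v.1, hl⟩))
    fun t => Polynomial.C (C (X (v.1, t))) +
      if v.1 = j then Polynomial.C (C (C (a (some t)))) * Polynomial.X else 0

lemma toRowLine_ofRowLine {a : Option τ → k} (ha : a none ≠ 0)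
    (r : Polynomial (MvPolynomial {l // l ≠ j} (MvPolynomial (ι × τ) k))) :
    toRowLine j a (ofRowLine j a r) = r := by
  have hC : ∀ c, toRowLine j a (C c) = Polynomial.C (C (C c)) := by simp [toRowLine]
  have hT : toRowLine j a (C (a none)⁻¹ * X (j, none)) = Polynomial.X := by
    rw [map_mul, hC]
    simp only [toRowLine, eval₂Hom_X', Option.elim_none, dite_true, ← mul_assoc, ← map_mul,
      inv_mul_cancel₀ ha, map_one, one_mul]
  have hdiv : ∀ c, C (c / a none) * X (j, none) =
      (C c * (C (a none)⁻¹ * X (j, none)) : MvPolynomial (ι × Option τ) k) := fun c => by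
    rw [div_eq_mul_inv, map_mul, mul_assoc]
  have h : (toRowLine j a).comp (ofRowLine j a) = RingHom.id _ := by
    refine Polynomial.ringHom_ext' (MvPolynomial.ringHom_ext' (MvPolynomial.ringHom_ext' ?_ ?_) ?_)
      ?_
    · ext c
      simp [ofRowLine, hC]
    · rintro ⟨l, t⟩
      by_cases hl : l = j
      · subst hl
        simp only [ofRowLine, hdiv, RingHom.comp_apply, Polynomial.coe_eval₂RingHom,
          Polynomial.eval₂_C, eval₂Hom_C, eval₂Hom_X', if_true, map_sub, map_mul _ (C _) (_ * _),
          hT, hC, RingHom.id_apply]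
        simp only [toRowLine, eval₂Hom_X', Option.elim_some, if_true]
        ring
      · simp [toRowLine, ofRowLine, hl]
    · rintro ⟨l, hl⟩
      simp [toRowLine, ofRowLine, hl]
    · simpa [ofRowLine] using hT
  exact DFunLike.congr_fun h r

lemma natDegree_aeval_monomial_rowWeight_le (z : ι × Option τ → k)
    (q : MvPolynomial (ι × Option τ) k) :
    (aeval (fun v => Polynomial.monomial (rowWeight j v) (z v)) q).natDegree ≤
      (toRowLine j (fun o => z (j, o)) q).natDegree := by
  classical
  let ev : MvPolynomial {l // l ≠ j} (MvPolynomial (ι × τ) k) →+* k :=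
    eval₂Hom (eval fun p : ι × τ => if p.1 = j then 0 else z (p.1, some p.2))
      fun l => z (l.1, none)
  have h : (aeval fun v => Polynomial.monomial (rowWeight j v) (z v) :
        MvPolynomial (ι × Option τ) k →ₐ[k] Polynomial k).toRingHom =
      (Polynomial.mapRingHom ev).comp (toRowLine j fun o => z (j, o)) := by
    refine MvPolynomial.ringHom_ext (by simp [toRowLine, ev]) ?_
    rintro ⟨l, o⟩
    by_cases hl : l = j
    · subst hl
      cases o <;> simp [toRowLine, ev, rowWeight, Polynomial.C_mul_X_eq_monomial]
    · cases o <;> simp [toRowLine, ev, rowWeight, hl]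
  exact (congrArg Polynomial.natDegree (DFunLike.congr_fun h q)).trans_le
    Polynomial.natDegree_map_le

variable [Fintype τ]

/-- The linear combination of `1` and the polynomials of one row given by the direction `a`. -/
noncomputable def directionForm (φ : τ → MvPolynomial σ k) (a : Option τ → k) : MvPolynomial σ k :=
  C (a none) + ∑ t, C (a (some t)) * φ t

open Classical in
/-- The substitution replacing row `j` by the point with `T = 0` of the line in the direction `a`
through it. -/
noncomputable def shearRow (Φ : ι → τ → MvPolynomial σ k) (j : ι) (a : Option τ → k) :
    MvPolynomial σ (MvPolynomial (ι × τ) k) →+* MvPolynomial σ (MvPolynomial (ι × τ) k) :=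
  eval₂Hom
    (eval₂Hom (C.comp C) fun p => C (X p) +
      if p.1 = j then C (C (a (some p.2) / a none)) * genericForm Φ j else 0)
    X

lemma shearRow_map_C (a : Option τ → k) (φ : MvPolynomial σ k) :
    shearRow Φ j a (map C φ) = map C φ := by
  have h : (shearRow Φ j a).comp (map C) = map C := by ext <;> simp [shearRow]
  exact DFunLike.congr_fun h φ

lemma shearRow_genericForm_of_ne (a : Option τ → k) {l : ι} (hl : l ≠ j) :
    shearRow Φ j a (genericForm Φ l) = genericForm Φ l := by
  simp only [genericForm, map_sum, map_mul, shearRow_map_C]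
  simp [shearRow, hl]

lemma shearRow_genericForm_self {a : Option τ → k} (ha : a none ≠ 0) :
    shearRow Φ j a (genericForm Φ j) =
      C (C (a none)⁻¹) * genericForm Φ j * map C (directionForm (Φ j) a) := by
  have hcoeff : ∀ t, shearRow Φ j a (C (X (j, t))) =
      C (X (j, t)) + C (C (a none)⁻¹) * genericForm Φ j * C (C (a (some t))) := fun t => by
    simp only [shearRow, eval₂Hom_C, eval₂Hom_X', if_true, div_eq_mul_inv, map_mul]
    ring
  have hinv : (C (C (a none)⁻¹) * C (C (a none)) :
      MvPolynomial σ (MvPolynomial (ι × τ) k)) = 1 := by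
    rw [← map_mul, ← map_mul, inv_mul_cancel₀ ha, map_one, map_one]
  calc shearRow Φ j a (genericForm Φ j)
      = ∑ t, (C (X (j, t)) + C (C (a none)⁻¹) * genericForm Φ j * C (C (a (some t)))) *
          map C (Φ j t) := by
        conv_lhs => rw [genericForm]
        simp only [map_sum, map_mul, shearRow_map_C, hcoeff]
    _ = genericForm Φ j + C (C (a none)⁻¹) * genericForm Φ j *
          ∑ t, C (C (a (some t))) * map C (Φ j t) := by
        simp only [add_mul, Finset.sum_add_distrib, Finset.mul_sum, ← mul_assoc, genericForm]
    _ = C (C (a none)⁻¹) * genericForm Φ j * map C (directionForm (Φ j) a) := by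
        simp only [directionForm, map_add, map_sum, map_mul, map_C]
        linear_combination (-genericForm Φ j) * hinv

lemma shearRow_aeval (a : Option τ → k)
    (c : MvPolynomial {l // l ≠ j} (MvPolynomial (ι × τ) k)) :
    shearRow Φ j a (aeval (fun l : {l // l ≠ j} => -genericForm Φ l.1) c) =
      eliminationHom Φ (ofRowLine j a (Polynomial.C c)) := by
  have h : (shearRow Φ j a).comp (aeval fun l : {l // l ≠ j} => -genericForm Φ l.1 :
        MvPolynomial {l // l ≠ j} (MvPolynomial (ι × τ) k) →ₐ[_] _).toRingHom =
      ((eliminationHom Φ).toRingHom.comp (ofRowLine j a)).comp Polynomial.C := by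
    refine MvPolynomial.ringHom_ext' (MvPolynomial.ringHom_ext' ?_ ?_) ?_
    · ext1 c
      simp [shearRow, ofRowLine, MvPolynomial.algebraMap_eq]
    · rintro ⟨l, t⟩
      by_cases hl : l = j
      · subst hl
        simp only [shearRow, ofRowLine, RingHom.comp_apply, AlgHom.toRingHom_eq_coe,
          RingHom.coe_coe, algHom_C, algebraMap_eq, coe_eval₂Hom, eval₂_C, eval₂_X, if_pos,
          Polynomial.coe_eval₂RingHom, Polynomial.eval₂_C, map_sub, map_mul,
          MvPolynomial.algebraMap_apply, eliminationHom_X_some, eliminationHom_X_none]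
        ring
      · simp [shearRow, ofRowLine, hl, MvPolynomial.algebraMap_eq]
    · rintro ⟨l, hl⟩
      simp [shearRow_genericForm_of_ne a hl, ofRowLine]
  exact DFunLike.congr_fun h c

theorem exists_eliminationHom_ofRowLine_eq_zero [Fintype ι] [DecidableEq ι] [Fintype σ]
    (hcard : Fintype.card σ = Fintype.card {l // l ≠ j}) {D : ι → ℕ} (hD : ∀ l, D l ≠ 0)
    (hΦ : ∀ l t, (Φ l t).totalDegree ≤ D l) {a : Option τ → k} (ha : a none ≠ 0)
    (hdir : directionForm (Φ j) a ≠ 0) :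
    ∃ r, r ≠ 0 ∧ r.natDegree ≤ ∏ l : {l // l ≠ j}, D l ∧
      eliminationHom Φ (ofRowLine j a r) = 0 := by
  set v : MvPolynomial σ (MvPolynomial (ι × τ) k) := map C (directionForm (Φ j) a)
  have hv0 : v ≠ 0 := by simpa [v, map_eq_zero_iff _ (map_injective C (C_injective _ _))] using hdir
  have hvD : v.totalDegree ≤ D j := (totalDegree_map_le _ _).trans <|
    (totalDegree_add _ _).trans <| max_le (by simp) <| totalDegree_finsetSum_le fun t _ =>
      (totalDegree_mul _ _).trans <| by rw [totalDegree_C, zero_add]; exact hΦ j t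
  obtain ⟨r, hr0, hrD, hr⟩ := exists_polynomial_relation hcard (fun l => hD l.1)
    (f := fun l : {l // l ≠ j} => -genericForm Φ l.1) (u := -genericForm Φ j)
    (fun l => by simpa using totalDegree_genericForm_le (hΦ l.1))
    (by simpa using totalDegree_genericForm_le (hΦ j)) hvD
  refine ⟨r, hr0, hrD, ?_⟩
  set T := eliminationHom Φ (ofRowLine j a Polynomial.X)
  have hu : shearRow Φ j a (-genericForm Φ j) = T * v := by
    simp only [T, ofRowLine, map_neg, shearRow_genericForm_self ha, v, Polynomial.coe_eval₂RingHom,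
      Polynomial.eval₂_X, map_mul, eliminationHom_C, eliminationHom_X_none]
    ring
  have hterm : ∀ i ∈ Finset.range (∏ l : {l // l ≠ j}, D l + 1),
      shearRow Φ j a (aeval (fun l : {l // l ≠ j} => -genericForm Φ l.1) (r.coeff i) *
        ((-genericForm Φ j) ^ i * v ^ (∏ l : {l // l ≠ j}, D l - i))) =
      v ^ (∏ l : {l // l ≠ j}, D l) *
        eliminationHom Φ (ofRowLine j a (Polynomial.C (r.coeff i) * Polynomial.X ^ i)) := by
    intro i hi
    rw [← Nat.add_sub_cancel' (Finset.mem_range_succ_iff.1 hi), pow_add]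
    simp only [map_mul, map_pow, shearRow_aeval, hu, v, shearRow_map_C, T, add_tsub_cancel_left]
    ring
  have hsum := congrArg (shearRow Φ j a) hr
  rw [map_sum, Finset.sum_congr rfl hterm, ← Finset.mul_sum, map_zero] at hsum
  rw [r.as_sum_range' _ (Nat.lt_succ_of_le hrD)]
  simp only [← Polynomial.C_mul_X_pow_eq_monomial, map_sum]
  exact (mul_eq_zero.1 hsum).resolve_left (pow_ne_zero _ hv0)

lemma exists_ne_zero_directionForm_ne_zero (Φ : ι → τ → MvPolynomial σ k) (j : ι) :
    ∃ f : MvPolynomial (ι × Option τ) k, f ≠ 0 ∧ ∀ z, eval z f ≠ 0 →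
      z (j, none) ≠ 0 ∧ directionForm (Φ j) (fun o => z (j, o)) ≠ 0 := by
  let f : MvPolynomial (ι × Option τ) k :=
    X (j, none) + ∑ t, C (constantCoeff (Φ j t)) * X (j, some t)
  have hf : f ≠ 0 := fun h0 => by
    simpa [f] using congrArg (eval fun v => v.2.elim 1 fun _ => 0) h0
  refine ⟨X (j, none) * f, mul_ne_zero (X_ne_zero _) hf, fun z hz => ?_⟩
  rw [map_mul, eval_X] at hz
  refine ⟨left_ne_zero_of_mul hz, fun h0 => right_ne_zero_of_mul hz ?_⟩
  simpa [f, directionForm, mul_comm] using congrArg constantCoeff h0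

theorem exists_resultant [Infinite k] [DecidableEq σ] [Fintype σ]
    {Φ : Option σ → τ → MvPolynomial σ k} {D : Option σ → ℕ} (hD : ∀ l, D l ≠ 0)
    (hΦ : ∀ l t, (Φ l t).totalDegree ≤ D l) {star : σ → τ}
    (hstar : ∀ s, Φ (some s) (star s) = X s ^ D (some s)) :
    ∃ q, q ≠ 0 ∧ eliminationHom Φ q = 0 ∧
      ∀ j, weightedTotalDegree (rowWeight j) q ≤ ∏ l : {l // l ≠ j}, D l := by
  have hcard : ∀ j : Option σ, Fintype.card σ = Fintype.card {l // l ≠ j} := by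
    simp
  have hprime : (RingHom.ker (eliminationHom Φ)).IsPrime := RingHom.ker_isPrime _
  obtain ⟨q, hq⟩ := isPrincipal_of_isPrime_of_comap_rename_eq_bot (none, none)
    (comap_rename_ker_eliminationHom (fun s => hD (some s)) hstar)
  replace hq : ∀ p, eliminationHom Φ p = 0 ↔ q ∣ p := fun p => by
    rw [← RingHom.mem_ker, hq, Ideal.submodule_span_eq, Ideal.mem_span_singleton]
  have hline : ∀ (j) {a : Option τ → k}, a none ≠ 0 → directionForm (Φ j) a ≠ 0 →
      q ≠ 0 ∧ (toRowLine j a q).natDegree ≤ ∏ l : {l // l ≠ j}, D l := by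
    intro j a ha hdir
    obtain ⟨r, hr0, hrD, hr⟩ := exists_eliminationHom_ofRowLine_eq_zero (hcard j) hD hΦ ha hdir
    have hqr := map_dvd (toRowLine j a) ((hq _).1 hr)
    rw [toRowLine_ofRowLine ha] at hqr
    exact ⟨fun h => hr0 (by simpa [h] using hqr),
      (Polynomial.natDegree_le_of_dvd hqr hr0).trans hrD⟩
  have hq0 : q ≠ 0 := (hline none (a := fun o => o.elim 1 0) (by simp) (by simp [directionForm])).1
  refine ⟨q, hq0, (hq q).2 dvd_rfl, fun j => ?_⟩
  obtain ⟨f, hf0, hf⟩ := exists_ne_zero_directionForm_ne_zero Φ j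
  obtain ⟨z, hz, hzq⟩ := exists_eval_ne_zero_weightedTotalDegree_le (rowWeight j) hq0 hf0
  exact hzq.trans <| (natDegree_aeval_monomial_rowWeight_le z q).trans
    (hline j (hf z hz).1 (hf z hz).2).2

end RowDegree

section Filtration

open MvPolynomial

lemma aeval_mem_weightedTotalDegree {k Q σ : Type*} [CommSemiring k] [CommSemiring Q] [Algebra k Q]
    {F : ℕ → Submodule k Q} [SetLike.GradedMonoid F] (hF : Monotone F) {w : σ → ℕ} {b : σ → Q}
    (hb : ∀ v, b v ∈ F (w v)) (R : MvPolynomial σ k) :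
    aeval b R ∈ F (weightedTotalDegree w R) := by
  rw [aeval_def, eval₂_eq]
  refine sum_mem fun m hm => ?_
  rw [← Algebra.smul_def]
  refine Submodule.smul_mem _ _ (hF (le_weightedTotalDegree w hm) ?_)
  rw [Finsupp.weight_apply]
  exact SetLike.prod_pow_mem_graded F _ _ _ fun v _ => hb v

instance gradedMonoid_coeffsIn {k Q σ : Type*} [CommSemiring k] [CommSemiring Q] [Algebra k Q]
    {F : ℕ → Submodule k Q} [SetLike.GradedMonoid F] :
    SetLike.GradedMonoid fun N => coeffsIn σ (F N) where
  one_mem := one_coeffsIn.2 (SetLike.GradedOne.one_mem (A := F))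
  mul_mem i j p q hp hq := by
    have hpq := Submodule.mul_mem_mul hp hq
    rw [← coeffsIn_mul] at hpq
    exact fun α => Submodule.mul_le.2 (fun _ ha _ hb => SetLike.mul_mem_graded ha hb) (hpq α)

lemma coeff_aeval_X_add_C_mem {k Q σ : Type*} [CommSemiring k] [CommSemiring Q] [Algebra k Q]
    {F : ℕ → Submodule k Q} [SetLike.GradedMonoid F] (hF : Monotone F) {w : σ → ℕ} {a : σ → Q}
    (ha : ∀ v, a v ∈ F (w v)) (R : MvPolynomial σ k) (α : σ →₀ ℕ) :
    coeff α (aeval (fun v => (X v + C (a v) : MvPolynomial σ Q)) R) ∈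
      F (weightedTotalDegree w R) := by
  refine aeval_mem_weightedTotalDegree (F := fun N => coeffsIn σ (F N))
    (fun _ _ h p hp i => hF h (hp i)) (fun v => add_mem ?_ (C_mem_coeffsIn.2 (ha v))) R α
  rw [X, monomial_mem_coeffsIn]
  exact hF (Nat.zero_le _) (SetLike.GradedOne.one_mem (A := F))

lemma aeval_X_add_C_ne_zero {k Q σ : Type*} [CommRing k] [CommRing Q] [Algebra k Q]
    [FaithfulSMul k Q] (a : σ → Q) {R : MvPolynomial σ k} (hR : R ≠ 0) :
    aeval (fun v => (X v + C (a v) : MvPolynomial σ Q)) R ≠ 0 := by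
  let shift : MvPolynomial σ Q →ₐ[Q] MvPolynomial σ Q := aeval fun v => X v - C (a v)
  have hshift : (shift.restrictScalars k).comp (aeval fun v => X v + C (a v)) =
      mapAlgHom (Algebra.ofId k Q) := by
    ext v
    simp [shift, algebraMap_eq]
  intro h0
  have hmap := DFunLike.congr_fun hshift R
  rw [AlgHom.comp_apply, h0, map_zero] at hmap
  exact hR (map_injective _ (FaithfulSMul.algebraMap_injective k Q)
    (hmap.symm.trans (map_zero _).symm))

instance gradedMonoid_restrictTotalDegree {R σ : Type*} [CommSemiring R] :
    SetLike.GradedMonoid (restrictTotalDegree σ R) where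
  one_mem := by simp [mem_restrictTotalDegree]
  mul_mem i j p q hp hq := by
    rw [mem_restrictTotalDegree] at *
    exact (totalDegree_mul p q).trans (add_le_add hp hq)

lemma monotone_restrictTotalDegree {R σ : Type*} [CommSemiring R] :
    Monotone (restrictTotalDegree σ R) := fun i j h p hp => by
  rw [mem_restrictTotalDegree] at *
  exact hp.trans h

/-- The polynomials over `A` of degree at most `N`, as a `k`-submodule. -/
noncomputable def natDegreeLE (k A : Type*) [CommSemiring k] [CommSemiring A] [Algebra k A]
    (N : ℕ) : Submodule k (Polynomial A) :=
  (Polynomial.degreeLE A N).restrictScalars k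

lemma mem_natDegreeLE {k A : Type*} [CommSemiring k] [CommSemiring A] [Algebra k A] {N : ℕ}
    {r : Polynomial A} : r ∈ natDegreeLE k A N ↔ r.natDegree ≤ N := by
  rw [natDegreeLE, Submodule.restrictScalars_mem, Polynomial.mem_degreeLE,
    Polynomial.natDegree_le_iff_degree_le]

instance gradedMonoid_natDegreeLE {k A : Type*} [CommSemiring k] [CommSemiring A] [Algebra k A] :
    SetLike.GradedMonoid (natDegreeLE k A) where
  one_mem := by simp [mem_natDegreeLE]
  mul_mem i j p q hp hq := by
    rw [mem_natDegreeLE] at *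
    exact Polynomial.natDegree_mul_le.trans (add_le_add hp hq)

lemma monotone_natDegreeLE {k A : Type*} [CommSemiring k] [CommSemiring A] [Algebra k A] :
    Monotone (natDegreeLE k A) := fun i j h p hp => by
  rw [mem_natDegreeLE] at *
  exact hp.trans h

/-- The univariate polynomials with all coefficients in `M`; compare `MvPolynomial.coeffsIn`. -/
noncomputable def univariateCoeffsIn {k Q : Type*} [CommSemiring k] [CommSemiring Q] [Algebra k Q]
    (M : Submodule k Q) : Submodule k (Polynomial Q) where
  carrier := {r | ∀ κ, r.coeff κ ∈ M}
  zero_mem' _ := by simp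
  add_mem' hr hs κ := by rw [Polynomial.coeff_add]; exact add_mem (hr κ) (hs κ)
  smul_mem' c r hr κ := by rw [Polynomial.coeff_smul]; exact M.smul_mem c (hr κ)

lemma mem_univariateCoeffsIn {k Q : Type*} [CommSemiring k] [CommSemiring Q] [Algebra k Q]
    {M : Submodule k Q} {r : Polynomial Q} : r ∈ univariateCoeffsIn M ↔ ∀ κ, r.coeff κ ∈ M :=
  Iff.rfl

lemma C_mem_univariateCoeffsIn {k Q : Type*} [CommSemiring k] [CommSemiring Q] [Algebra k Q]
    {M : Submodule k Q} {c : Q} (hc : c ∈ M) : Polynomial.C c ∈ univariateCoeffsIn M := fun κ => by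
  rw [Polynomial.coeff_C]
  split_ifs
  exacts [hc, zero_mem M]

instance gradedMonoid_univariateCoeffsIn {k Q : Type*} [CommSemiring k] [CommSemiring Q]
    [Algebra k Q] {F : ℕ → Submodule k Q} [SetLike.GradedMonoid F] :
    SetLike.GradedMonoid fun N => univariateCoeffsIn (F N) where
  one_mem := C_mem_univariateCoeffsIn (SetLike.GradedOne.one_mem (A := F))
  mul_mem i j r s hr hs κ := by
    rw [Polynomial.coeff_mul]
    exact sum_mem fun p _ => SetLike.mul_mem_graded (hr p.1) (hs p.2)

lemma weightedTotalDegree_comp_fst_le {k ι τ : Type*} [CommSemiring k] [Fintype ι] (c : ι → ℕ)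
    (q : MvPolynomial (ι × τ) k) :
    weightedTotalDegree (fun v => c v.1) q ≤ ∑ j, c j * weightedTotalDegree (rowWeight j) q := by
  classical
  refine Finset.sup_le fun m hm => ?_
  calc Finsupp.weight (fun v : ι × τ => c v.1) m
      = ∑ j, c j * Finsupp.weight (rowWeight j) m := by
        simp only [Finsupp.weight_apply, Finsupp.sum, Finset.mul_sum, rowWeight, smul_eq_mul]
        rw [Finset.sum_comm]
        simp [mul_comm]
    _ ≤ _ := Finset.sum_le_sum fun j _ => Nat.mul_le_mul_left _ (le_weightedTotalDegree _ hm)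

end Filtration

section Systems

open MvPolynomial

lemma aevalTower_comp_X {k σ V B : Type*} [CommSemiring k] [CommSemiring B] [Algebra k B]
    (f : MvPolynomial σ (MvPolynomial V k) →ₐ[k] B) :
    aevalTower (aeval fun v => f (C (X v))) (fun l => f (X l)) = f := by
  ext <;> simp

lemma aevalTower_aeval_X {R A B σ : Type*} [CommSemiring R] [CommSemiring A] [CommSemiring B]
    [Algebra R A] [Algebra R B] (f : A →ₐ[R] B) (x : σ → B) (l : σ) (r : Polynomial A) :
    aevalTower f x (Polynomial.aeval (X l) r) = r.eval₂ f.toRingHom (x l) := by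
  rw [Polynomial.aeval_def, algebraMap_eq]
  refine (Polynomial.hom_eval₂ r C (aevalTower f x).toRingHom (X l)).trans ?_
  exact congrArg₂ (fun g b => r.eval₂ g b) (aevalTower_comp_C f x) (aevalTower_X f x l)

/-- A system of sparse polynomial equations in the unknowns `x : σ → k`, with indeterminate
coefficients indexed by `V`: equation `j` is `∑ v, p v * form j v x = 0`. Every equation has a pivot
coefficient, which occurs in no other equation and for which the equation can be solved where
`denom` does not vanish. -/
structure PivotedSystem (k ι σ V : Type*) [Field k] where
  form : ι → V → MvPolynomial σ k
  pivot : ι → V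
  form_pivot_of_ne : ∀ {l j}, l ≠ j → form l (pivot j) = 0
  denom : MvPolynomial σ k
  denom_ne_zero : denom ≠ 0
  form_pivot_dvd : ∀ j, form j (pivot j) ∣ denom
  deg : ι → ℕ
  deg_ne_zero : ∀ j, deg j ≠ 0
  totalDegree_form_le : ∀ j v, (form j v).totalDegree ≤ deg j

namespace PivotedSystem

variable {k ι σ V : Type*} [Field k] (s : PivotedSystem k ι σ V)

variable {s} in
lemma isUnit_form_pivot {B : Type*} [CommRing B] [Algebra k B]
    {f : MvPolynomial σ (MvPolynomial V k) →ₐ[k] B}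
    (hden : IsUnit (f (map C s.denom))) (j : ι) :
    IsUnit (f (map C (s.form j (s.pivot j)))) :=
  isUnit_of_dvd_unit (map_dvd f (map_dvd (map C) (s.form_pivot_dvd j))) hden

variable [Fintype V]

/-- The `j`-th equation of a system, as a polynomial in the unknowns and in the coefficients. -/
noncomputable def equation (j : ι) : MvPolynomial σ (MvPolynomial V k) :=
  ∑ v, C (X v) * map C (s.form j v)

variable {s} {B : Type*} [CommRing B] [Algebra k B]

lemma aevalTower_equation (p : V → B) (x : σ → B) (j : ι) :
    aevalTower (aeval p : MvPolynomial V k →ₐ[k] B) x (s.equation j) =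
      ∑ v, p v * aeval x (s.form j v) := by
  simp [equation, aevalTower_aeval_map_C]

/-- Changing the pivot coefficients only, all right hand sides can be prescribed. -/
lemma exists_algHom_equation_eq_sub [Finite ι]
    (f : MvPolynomial σ (MvPolynomial V k) →ₐ[k] B) (hden : IsUnit (f (map C s.denom)))
    (e : ι → B) :
    ∃ g : MvPolynomial σ (MvPolynomial V k) →ₐ[k] B,
      (∀ j, g (s.equation j) = f (s.equation j) - e j) ∧ (∀ φ, g (map C φ) = f (map C φ)) ∧
      ∀ a, g a - f a ∈ Ideal.span (Set.range e) := by
  classical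
  cases nonempty_fintype ι
  choose u hu using fun j => (isUnit_form_pivot hden j).exists_left_inv
  let x : σ → B := fun l => f (X l)
  let q : V → B := fun v => f (C (X v)) - ∑ j, if v = s.pivot j then e j * u j else 0
  have hf (φ) : aeval x φ = f (map C φ) := by
    rw [← aevalTower_aeval_map_C (fun v => f (C (X v))), aevalTower_comp_X]
  refine ⟨aevalTower (aeval q) x, fun j => ?_, fun φ => by rw [aevalTower_aeval_map_C, hf],
    fun a => ?_⟩
  · have hpivot : ∑ v, (∑ l, if v = s.pivot l then e l * u l else 0) *
        f (map C (s.form j v)) = e j := by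
      simp only [Finset.sum_mul, ite_mul, zero_mul]
      rw [Finset.sum_comm, Finset.sum_eq_single j]
      · rw [Fintype.sum_ite_eq', mul_assoc, hu, mul_one]
      · intro l _ hl
        rw [Fintype.sum_ite_eq', s.form_pivot_of_ne hl.symm, map_zero, map_zero, mul_zero]
      · simp
    rw [aevalTower_equation, ← aevalTower_comp_X f, aevalTower_equation]
    simp only [hf, q, sub_mul, Finset.sum_sub_distrib, hpivot]
    simp [x, hf]
  · let π := Ideal.Quotient.mkₐ k (Ideal.span (Set.range e))
    have hπ : π.comp (aevalTower (aeval q) x) = π.comp f := by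
      ext v
      · have hsum : π (∑ j, if v = s.pivot j then e j * u j else 0) = 0 :=
          Ideal.Quotient.eq_zero_iff_mem.2 <| sum_mem fun j _ => by
            split_ifs
            exacts [Ideal.mul_mem_right _ _ (Ideal.subset_span ⟨j, rfl⟩), zero_mem _]
        simp [q, hsum]
      · simp [x]
    exact Ideal.Quotient.eq.1 (DFunLike.congr_fun hπ a)

end PivotedSystem

end Systems

section Relations

open MvPolynomial

lemma eval₂_aeval_X_add_C {k A B W : Type*} [CommSemiring k] [CommSemiring A] [CommSemiring B]
    [Algebra k A] [Algebra k B] (Ψ : A →ₐ[k] B) (y : W → B) (a : W → A) (R : MvPolynomial W k) :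
    eval₂ Ψ.toRingHom y (aeval (fun v => (X v + C (a v) : MvPolynomial W A)) R) =
      aeval (fun v => y v + Ψ (a v)) R := by
  have hcomp : (eval₂Hom Ψ.toRingHom y).comp
      (aeval fun v => (X v + C (a v) : MvPolynomial W A) : MvPolynomial W k →ₐ[k] _).toRingHom =
        (aeval fun v => y v + Ψ (a v)).toRingHom := by
    refine ringHom_ext (fun c => ?_) fun v => ?_
    · simp [MvPolynomial.algebraMap_apply]
    · simp
  exact DFunLike.congr_fun hcomp R

lemma exists_coeff_aeval_X_add_C_ne_zero {k Q E W : Type*} [CommRing k] [CommRing Q] [CommRing E]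
    [Algebra k Q] [Algebra k E] [FaithfulSMul k Q] {Ψ : Q →ₐ[k] MvPolynomial W E} {a : W → Q}
    {R : MvPolynomial W k} (hR : R ≠ 0) (hR0 : aeval (fun v => X v + Ψ (a v)) R = 0) :
    ∃ α, coeff α (aeval (fun v => (X v + C (a v) : MvPolynomial W Q)) R) ≠ 0 ∧
      constantCoeff (Ψ (coeff α (aeval (fun v => (X v + C (a v) : MvPolynomial W Q)) R))) = 0 :=
  exists_coeff_ne_zero_of_eval₂_eq_zero (aeval_X_add_C_ne_zero a hR)
    ((eval₂_aeval_X_add_C Ψ X a R).trans hR0)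

namespace PivotedSystem

variable {k σ V : Type*} [Field k] (s : PivotedSystem k σ σ V)

/-- The forms of the overdetermined system consisting of the equations of `s` and of one more
equation in the monomials `S`. The `σ`-indexed summand of the index type holds the pure powers
required in `exists_resultant`. -/
noncomputable def extendedForm [DecidableEq σ] (S : Finset (σ →₀ ℕ)) :
    Option σ → V ⊕ σ ⊕ S → MvPolynomial σ k
  | none, .inr (.inr m) => monomial m 1
  | none, _ => 0
  | some j, .inl v => s.form j v
  | some j, .inr (.inl l) => if l = j then X l ^ s.deg l else 0
  | some _, .inr (.inr _) => 0

variable {s} in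
/-- The coefficients of the system formed by the equations of `s` and the equation `H = T`, where
`T` is the indeterminate of `Polynomial (MvPolynomial V k)`. -/
noncomputable def extendedCoeff (H : MvPolynomial σ (MvPolynomial V k)) :
    Option σ × Option (V ⊕ σ ⊕ H.support) → Polynomial (MvPolynomial V k)
  | (none, none) => Polynomial.X
  | (none, some (.inr (.inr m))) => -Polynomial.C (coeff m H)
  | (some _, some (.inl v)) => Polynomial.C (X v)
  | _ => 0

/-- The degrees of the rows of `extendedForm`. -/
def extendedDeg (e : ℕ) : Option σ → ℕ := fun l => l.elim e s.deg

lemma totalDegree_extendedForm_le [DecidableEq σ] {e : ℕ} {S : Finset (σ →₀ ℕ)}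
    (hS : ∀ m ∈ S, m.degree ≤ e) (l : Option σ) (t : V ⊕ σ ⊕ S) :
    (s.extendedForm S l t).totalDegree ≤ s.extendedDeg e l := by
  rcases l with _ | j <;> rcases t with v | l | m
  · simp [extendedForm]
  · simp [extendedForm]
  · exact (totalDegree_monomial_le _ _).trans (hS m m.2)
  · exact s.totalDegree_form_le j v
  · simp only [extendedForm]
    split_ifs with h
    · rw [h, totalDegree_X_pow]; rfl
    · simp
  · simp [extendedForm]

lemma extendedDeg_ne_zero {e : ℕ} (he : e ≠ 0) : ∀ l, s.extendedDeg e l ≠ 0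
  | none => he
  | some j => s.deg_ne_zero j

lemma prod_extendedDeg_ne_none [Fintype σ] (e : ℕ) :
    ∏ l : {l : Option σ // l ≠ none}, s.extendedDeg e l = ∏ j, s.deg j := by
  rw [← Finset.prod_subtype (Finset.univ.map .some) (by simp [← Option.ne_none_iff_exists]),
    Finset.prod_map]
  rfl

lemma prod_extendedDeg_le [Fintype σ] [DecidableEq σ] {e : ℕ} (he : e ≠ 0) (j : σ) :
    ∏ l : {l // l ≠ some j}, s.extendedDeg e l ≤ (∏ j, s.deg j) * e :=
  calc _ ≤ s.extendedDeg e (some j) * ∏ l : {l // l ≠ some j}, s.extendedDeg e l :=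
        Nat.le_mul_of_pos_left _ (Nat.pos_of_ne_zero (s.extendedDeg_ne_zero he _))
    _ = ∏ l, s.extendedDeg e l := (Fintype.prod_eq_mul_prod_subtype_ne _ _).symm
    _ = (∏ j, s.deg j) * e := by rw [Fintype.prod_option, mul_comm]; rfl

lemma extendedCoeff_mem_natDegreeLE (H : MvPolynomial σ (MvPolynomial V k)) :
    ∀ v, extendedCoeff H v ∈ natDegreeLE k (MvPolynomial V k) (rowWeight none v) := by
  rintro ⟨_ | j, _ | v | l | m⟩ <;> simp [extendedCoeff, mem_natDegreeLE, rowWeight]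

lemma extendedCoeff_mem_univariateCoeffsIn {μ : ℕ} {H : MvPolynomial σ (MvPolynomial V k)}
    (hH : ∀ m, (coeff m H).totalDegree ≤ μ) :
    ∀ v, extendedCoeff H v ∈
      univariateCoeffsIn (restrictTotalDegree V k (v.1.elim μ fun _ => 1)) := by
  have hX (N : ℕ) : Polynomial.X ∈ univariateCoeffsIn (restrictTotalDegree V k N) := fun κ => by
    rw [Polynomial.coeff_X, mem_restrictTotalDegree]
    split_ifs <;> simp
  rintro ⟨_ | j, _ | v | l | m⟩ <;> try exact zero_mem _
  · exact hX μ
  · exact neg_mem (C_mem_univariateCoeffsIn ((mem_restrictTotalDegree _ _ _).2 (hH m)))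
  · exact C_mem_univariateCoeffsIn ((mem_restrictTotalDegree _ _ _).2 (totalDegree_X _).le)

variable {s} in
lemma totalDegree_coeff_coeff_extendedCoeff_le [Fintype σ] {μ : ℕ}
    {H : MvPolynomial σ (MvPolynomial V k)} (hH : ∀ m, (coeff m H).totalDegree ≤ μ)
    (R : MvPolynomial (Option σ × Option (V ⊕ σ ⊕ H.support)) k)
    (α : Option σ × Option (V ⊕ σ ⊕ H.support) →₀ ℕ) (κ : ℕ) :
    ((coeff α (aeval (fun v => (X v + C (extendedCoeff H v) : MvPolynomial _ _)) R)).coeff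
        κ).totalDegree ≤
      ∑ j, weightedTotalDegree (rowWeight (some j)) R +
        weightedTotalDegree (rowWeight none) R * μ := by
  let c : Option σ → ℕ := fun l => l.elim μ fun _ => 1
  have hmono : Monotone fun N => univariateCoeffsIn (restrictTotalDegree V k N) :=
    fun _ _ h _ hr κ => monotone_restrictTotalDegree h (hr κ)
  have ha : ∀ v, extendedCoeff H v ∈ univariateCoeffsIn (restrictTotalDegree V k (c v.1)) :=
    extendedCoeff_mem_univariateCoeffsIn hH
  have hmem := coeff_aeval_X_add_C_mem hmono ha R α
  have hcoeff := (mem_restrictTotalDegree _ _ _).1 (mem_univariateCoeffsIn.1 hmem κ)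
  refine hcoeff.trans ((weightedTotalDegree_comp_fst_le c R).trans_eq ?_)
  simp [c, Fintype.sum_option, add_comm, mul_comm]

variable {s} {E : Type*} [CommRing E] [Algebra k E]

lemma map_eq_sum_support (g : MvPolynomial σ (MvPolynomial V k) →ₐ[k] E)
    (H : MvPolynomial σ (MvPolynomial V k)) :
    g H = ∑ m : H.support, g (C (coeff m H)) * g (map C (monomial (m : σ →₀ ℕ) 1)) := by
  conv_lhs => rw [H.as_sum, map_sum, ← Finset.sum_coe_sort]
  refine Finset.sum_congr rfl fun m _ => ?_
  rw [← map_mul, map_monomial, map_one, C_mul_monomial, mul_one]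

variable [Fintype V]

lemma exists_perturbation [Finite σ] {W : Type*}
    {f : MvPolynomial σ (MvPolynomial V k) →ₐ[k] E} (hf : ∀ j, f (s.equation j) = 0)
    (hden : IsUnit (f (map C s.denom))) {e : σ → MvPolynomial W E}
    (he : ∀ j, constantCoeff (e j) = 0) :
    ∃ g : MvPolynomial σ (MvPolynomial V k) →ₐ[k] MvPolynomial W E,
      (∀ j, g (s.equation j) = -e j) ∧ (∀ φ, g (map C φ) = C (f (map C φ))) ∧
      ∀ a, constantCoeff (g a) = f a := by
  let Cf := (Algebra.ofId E (MvPolynomial W E)).restrictScalars k |>.comp f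
  have hCf (a) : Cf a = C (f a) := rfl
  obtain ⟨g, hg, hgφ, hga⟩ := s.exists_algHom_equation_eq_sub Cf
    (hCf _ ▸ hden.map (C : E →+* MvPolynomial W E)) e
  refine ⟨g, fun j => by rw [hg, hCf, hf, map_zero, zero_sub], fun φ => by rw [hgφ, hCf],
    fun a => ?_⟩
  have hker : Ideal.span (Set.range e) ≤ RingHom.ker (constantCoeff : MvPolynomial W E →+* E) :=
    Ideal.span_le.2 (Set.range_subset_iff.2 he)
  have hconst := hker (hga a)
  rwa [RingHom.mem_ker, map_sub, sub_eq_zero, hCf, constantCoeff_C] at hconst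

/-- The system satisfied by the perturbed solution: its coefficients are those of the extended
system shifted by independent indeterminates. -/
lemma exists_algHom_extended_system [Fintype σ] [DecidableEq σ]
    {f : MvPolynomial σ (MvPolynomial V k) →ₐ[k] E} (hf : ∀ j, f (s.equation j) = 0)
    (hden : IsUnit (f (map C s.denom))) (H : MvPolynomial σ (MvPolynomial V k)) :
    ∃ (Ψ : Polynomial (MvPolynomial V k) →ₐ[k]
        MvPolynomial (Option σ × Option (V ⊕ σ ⊕ H.support)) E)
      (x : σ → MvPolynomial (Option σ × Option (V ⊕ σ ⊕ H.support)) E),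
      (∀ r, constantCoeff (Ψ r) = f (Polynomial.aeval H r)) ∧
      ∀ l, ∑ t, (X (l, some t) + Ψ (extendedCoeff H (l, some t))) *
          aeval x (s.extendedForm H.support l t) +
        (X (l, none) + Ψ (extendedCoeff H (l, none))) = 0 := by
  let W := Option σ × Option (V ⊕ σ ⊕ H.support)
  let pert : Option σ → MvPolynomial W E := fun l =>
    ∑ t, X (l, some t) * C (f (map C (s.extendedForm H.support l t))) + X (l, none)
  have hpert (l) : constantCoeff (pert l) = 0 := by simp [pert]
  obtain ⟨g, hg, hgφ, hga⟩ := exists_perturbation hf hden fun j => hpert (some j)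
  have hx (φ : MvPolynomial σ k) : aeval (fun l => g (X l)) φ = g (map C φ) := by
    rw [← aevalTower_aeval_map_C (fun v => g (C (X v))), aevalTower_comp_X]
  let Ψ : Polynomial (MvPolynomial V k) →ₐ[k] MvPolynomial W E :=
    Polynomial.aevalTower (g.comp (IsScalarTower.toAlgHom k (MvPolynomial V k) _))
      (g H - pert none)
  have hΨC (a) : Ψ (Polynomial.C a) = g (C a) := by simp [Ψ, algebraMap_eq]
  have hΨX : Ψ Polynomial.X = g H - pert none := by simp [Ψ]
  have hrow (l) : ∑ t, Ψ (extendedCoeff H (l, some t)) *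
      g (map C (s.extendedForm H.support l t)) + Ψ (extendedCoeff H (l, none)) = -pert l := by
    rcases l with _ | j
    · simp only [Fintype.sum_sum_type, extendedCoeff, extendedForm, map_zero, zero_mul,
        Finset.sum_const_zero, zero_add, map_neg, hΨC, hΨX, neg_mul, Finset.sum_neg_distrib,
        ← map_eq_sum_support]
      ring
    · rw [← hg, equation, map_sum]
      simp [Fintype.sum_sum_type, extendedCoeff, extendedForm, hΨC]
  refine ⟨Ψ, fun l => g (X l), fun r => ?_, fun l => ?_⟩
  · have hcomp : (constantCoeff : MvPolynomial W E →+* E).comp Ψ.toRingHom =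
        f.toRingHom.comp (Polynomial.aeval H).toRingHom := by
      refine Polynomial.ringHom_ext' (RingHom.ext fun a => ?_) ?_
      · simp [hΨC, hga, algebraMap_eq]
      · simp [hΨX, hga, hpert]
    exact DFunLike.congr_fun hcomp r
  · simp only [hx, add_mul, Finset.sum_add_distrib]
    have hsum := hrow l
    simp only [pert, ← hgφ] at hsum
    linear_combination hsum

/-- The equation is the part of lowest order of the resultant of the extended system, evaluated at
the perturbed coefficients. -/
theorem exists_relation [Infinite k] [Fintype σ]
    {f : MvPolynomial σ (MvPolynomial V k) →ₐ[k] E} (hf : ∀ j, f (s.equation j) = 0)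
    (hden : IsUnit (f (map C s.denom))) {H : MvPolynomial σ (MvPolynomial V k)} {e μ : ℕ}
    (he : e ≠ 0) (hHe : H.totalDegree ≤ e) (hHμ : ∀ m, (coeff m H).totalDegree ≤ μ) :
    ∃ r : Polynomial (MvPolynomial V k), r ≠ 0 ∧ r.natDegree ≤ ∏ j, s.deg j ∧
      (∀ κ, (r.coeff κ).totalDegree ≤
        Fintype.card σ * ((∏ j, s.deg j) * e) + (∏ j, s.deg j) * μ) ∧
      f (Polynomial.aeval H r) = 0 := by
  classical
  obtain ⟨Ψ, x, hΨ, hsys⟩ := exists_algHom_extended_system hf hden H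
  obtain ⟨R, hR, hR0, hRdeg⟩ := exists_resultant (s.extendedDeg_ne_zero he)
    (s.totalDegree_extendedForm_le (S := H.support) fun m hm => (le_totalDegree hm).trans hHe)
    (star := fun j => .inr (.inl j)) (fun j => if_pos rfl)
  obtain ⟨α, hα, hα0⟩ := exists_coeff_aeval_X_add_C_ne_zero hR
    (aeval_eq_zero_of_eliminationHom_eq_zero (c := fun v => X v + Ψ (extendedCoeff H v)) hsys hR0)
  refine ⟨_, hα, ?_, fun κ => ?_, (hΨ _).symm.trans hα0⟩
  · have hmem := coeff_aeval_X_add_C_mem monotone_natDegreeLE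
      (extendedCoeff_mem_natDegreeLE H) R α
    exact (mem_natDegreeLE.1 hmem).trans ((hRdeg none).trans (s.prod_extendedDeg_ne_none e).le)
  · refine (totalDegree_coeff_coeff_extendedCoeff_le hHμ R α κ).trans (add_le_add ?_ ?_)
    · simpa using Finset.sum_le_card_nsmul Finset.univ _ _ fun j _ =>
        (hRdeg (some j)).trans (s.prod_extendedDeg_le he j)
    · exact Nat.mul_le_mul_right μ ((hRdeg none).trans (s.prod_extendedDeg_ne_none e).le)

end PivotedSystem

end Relations

section GenericSolution

open MvPolynomial

lemma map_eq_zero_of_forall_eval₂_iterate_derivative {A E : Type*} [CommRing A] [CommRing E]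
    [IsDomain E] {φ : A →+* E} {x : E} {r : Polynomial A} {N : ℕ} (hN : (N.factorial : E) ≠ 0)
    (hr : r.natDegree ≤ N) (h : ∀ m, (Polynomial.derivative^[m] r).eval₂ φ x = 0) :
    r.map φ = 0 := by
  classical
  by_contra hne
  have hdeg : (r.map φ).natDegree ≤ N := Polynomial.natDegree_map_le.trans hr
  have hmult := ((r.map φ).roots.count_le_card x).trans (Polynomial.card_roots' _)
  rw [Polynomial.count_roots] at hmult
  refine hmult.not_gt
    (Polynomial.lt_rootMultiplicity_of_isRoot_iterate_derivative_of_mem_nonZeroDivisors hne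
      (fun m _ => ?_) (mem_nonZeroDivisors_of_ne_zero ?_))
  · rw [Polynomial.iterate_derivative_map, Polynomial.IsRoot, Polynomial.eval_map, h]
  · exact ne_zero_of_dvd_ne_zero hN (Nat.cast_dvd_cast (Nat.factorial_dvd_factorial hdeg))

namespace PivotedSystem

variable {k ι σ V : Type*} [Field k] (s : PivotedSystem k ι σ V)

/-- The ring of polynomials in the unknowns and the coefficients, with `denom` inverted: the
target of the generic solution. -/
abbrev GenericRing : Type _ :=
  Localization.Away (map C s.denom : MvPolynomial σ (MvPolynomial V k))

lemma map_C_denom_ne_zero : (map C s.denom : MvPolynomial σ (MvPolynomial V k)) ≠ 0 :=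
  (map_ne_zero_iff _ (map_injective _ (C_injective V k))).2 s.denom_ne_zero

instance : IsDomain s.GenericRing :=
  IsLocalization.isDomain_localization
    (powers_le_nonZeroDivisors_of_noZeroDivisors s.map_C_denom_ne_zero)

lemma algebraMap_genericRing_injective :
    Function.Injective (algebraMap (MvPolynomial σ (MvPolynomial V k)) s.GenericRing) :=
  IsLocalization.injective _ (powers_le_nonZeroDivisors_of_noZeroDivisors s.map_C_denom_ne_zero)

variable [Fintype V] [Finite ι]

lemma exists_genericSolution :
    ∃ θ : MvPolynomial σ (MvPolynomial V k) →ₐ[k] s.GenericRing,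
      (∀ j, θ (s.equation j) = 0) ∧
      (∀ φ, θ (map C φ) = algebraMap (MvPolynomial σ (MvPolynomial V k)) _ (map C φ)) ∧
      ∀ a, θ a - algebraMap _ _ a ∈ (Ideal.span (Set.range s.equation)).map (algebraMap _ _) := by
  have hden : IsUnit (algebraMap (MvPolynomial σ (MvPolynomial V k)) s.GenericRing
      (map C s.denom)) := IsLocalization.Away.algebraMap_isUnit _
  obtain ⟨θ, hθ, hθφ, hθa⟩ := exists_algHom_equation_eq_sub
    (IsScalarTower.toAlgHom k _ s.GenericRing) hden fun j => algebraMap _ _ (s.equation j)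
  refine ⟨θ, fun j => (hθ j).trans (sub_self _), hθφ, fun a => ?_⟩
  rw [Ideal.map_span, ← Set.range_comp]
  exact hθa a

/-- The generic solution of the system: the unknowns and all coefficients but the pivots are
indeterminates, and the pivot coefficients are solved for. -/
noncomputable def genericSolution : MvPolynomial σ (MvPolynomial V k) →ₐ[k] s.GenericRing :=
  s.exists_genericSolution.choose

lemma genericSolution_equation (j : ι) : s.genericSolution (s.equation j) = 0 :=
  s.exists_genericSolution.choose_spec.1 j

lemma genericSolution_map_C (φ : MvPolynomial σ k) :
    s.genericSolution (map C φ) = algebraMap (MvPolynomial σ (MvPolynomial V k)) _ (map C φ) :=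
  s.exists_genericSolution.choose_spec.2.1 φ

lemma isUnit_genericSolution_denom : IsUnit (s.genericSolution (map C s.denom)) := by
  rw [genericSolution_map_C]
  exact IsLocalization.Away.algebraMap_isUnit _

lemma genericSolution_map_C_ne_zero {φ : MvPolynomial σ k} (hφ : φ ≠ 0) :
    s.genericSolution (map C φ) ≠ 0 := by
  rw [genericSolution_map_C, map_ne_zero_iff _ s.algebraMap_genericRing_injective,
    map_ne_zero_iff _ (map_injective _ (C_injective V k))]
  exact hφ

lemma genericSolution_X_ne_zero (i : σ) : s.genericSolution (X i) ≠ 0 := by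
  simpa only [map_X] using s.genericSolution_map_C_ne_zero (X_ne_zero i)

variable {s}

lemma exists_denom_pow_mul_mem_span {a : MvPolynomial σ (MvPolynomial V k)}
    (ha : s.genericSolution a = 0) :
    ∃ N : ℕ, map C s.denom ^ N * a ∈ Ideal.span (Set.range s.equation) := by
  have hmem := s.exists_genericSolution.choose_spec.2.2 a
  rw [← genericSolution, ha, zero_sub, neg_mem_iff, IsLocalization.mem_map_algebraMap_iff
    (Submonoid.powers (map C s.denom : MvPolynomial σ (MvPolynomial V k)))] at hmem
  obtain ⟨⟨b, _, N, rfl⟩, hb⟩ := hmem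
  rw [← map_mul] at hb
  exact ⟨N, by simpa only [mul_comm, s.algebraMap_genericRing_injective hb] using b.2⟩

lemma eq_zero_of_genericSolution_eq_zero {B : Type*} [CommRing B]
    {f : MvPolynomial σ (MvPolynomial V k) →+* B} (hf : ∀ j, f (s.equation j) = 0)
    (hden : f (map C s.denom) ∈ nonZeroDivisors B) {a : MvPolynomial σ (MvPolynomial V k)}
    (ha : s.genericSolution a = 0) : f a = 0 := by
  obtain ⟨N, hN⟩ := exists_denom_pow_mul_mem_span ha
  have hker : Ideal.span (Set.range s.equation) ≤ RingHom.ker f :=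
    Ideal.span_le.2 (Set.range_subset_iff.2 hf)
  have hmul : f (map C s.denom) ^ N * f a = 0 := by
    rw [← map_pow, ← map_mul]
    exact hker hN
  exact (mul_right_mem_nonZeroDivisors_eq_zero_iff (pow_mem hden N)).1 (by rwa [mul_comm])

lemma aevalTower_eq_zero_of_genericSolution_eq_zero {B : Type*} [CommRing B] [IsDomain B]
    [Algebra k B] {q : V → B} {x : σ → B} (hx : ∀ j, ∑ v, q v * aeval x (s.form j v) = 0)
    (hdenom : aeval x s.denom ≠ 0) {a : MvPolynomial σ (MvPolynomial V k)}
    (ha : s.genericSolution a = 0) : aevalTower (aeval q : MvPolynomial V k →ₐ[k] B) x a = 0 :=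
  eq_zero_of_genericSolution_eq_zero
    (f := (aevalTower (aeval q : MvPolynomial V k →ₐ[k] B) x).toRingHom)
    (fun j => (aevalTower_equation q x j).trans (hx j))
    (mem_nonZeroDivisors_of_ne_zero ((aevalTower_aeval_map_C q x s.denom).symm ▸ hdenom)) ha

end PivotedSystem

section Jacobian

namespace PivotedSystem

variable {k σ V : Type*} [Field k] (s : PivotedSystem k σ σ V) [Fintype V] [Fintype σ]

/-- The Jacobian determinant of the system with respect to the unknowns. -/
noncomputable def jacobian [DecidableEq σ] : MvPolynomial σ (MvPolynomial V k) :=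
  (Matrix.of fun j l => pderiv l (s.equation j)).det

variable {s}

/-- A tangent vector at the generic solution induces a derivation, which kills all relations. -/
lemma sum_mul_genericSolution_pderiv_eq_zero {v : σ → s.GenericRing}
    (hv : ∀ j, ∑ l, v l * s.genericSolution (pderiv l (s.equation j)) = 0)
    {a : MvPolynomial σ (MvPolynomial V k)} (ha : s.genericSolution a = 0) :
    ∑ l, v l * s.genericSolution (pderiv l a) = 0 := by
  have hmul (b c) : ∑ l, v l * s.genericSolution (pderiv l (b * c)) =
      s.genericSolution b * ∑ l, v l * s.genericSolution (pderiv l c) +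
        s.genericSolution c * ∑ l, v l * s.genericSolution (pderiv l b) := by
    rw [Finset.mul_sum, Finset.mul_sum, ← Finset.sum_add_distrib]
    refine Finset.sum_congr rfl fun l _ => ?_
    rw [pderiv_mul, map_add, map_mul, map_mul]
    ring
  have hspan : ∀ b ∈ Ideal.span (Set.range s.equation),
      s.genericSolution b = 0 ∧ ∑ l, v l * s.genericSolution (pderiv l b) = 0 := fun b hb => by
    induction hb using Submodule.span_induction with
    | mem b hb =>
      obtain ⟨j, rfl⟩ := hb
      exact ⟨s.genericSolution_equation j, hv j⟩
    | zero => simp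
    | add b c _ _ hb hc => simp [mul_add, Finset.sum_add_distrib, hb.1, hb.2, hc.1, hc.2]
    | smul c b _ hb => simp only [smul_eq_mul, map_mul, hmul, hb.1, hb.2, mul_zero, zero_mul,
        add_zero, and_self]
  obtain ⟨N, hN⟩ := exists_denom_pow_mul_mem_span ha
  have hzero := (hspan _ hN).2
  rw [hmul, ha, zero_mul, add_zero, map_pow] at hzero
  exact (mul_eq_zero.1 hzero).resolve_left (s.isUnit_genericSolution_denom.pow N).ne_zero

lemma genericSolution_jacobian_ne_zero [DecidableEq σ] {N : ℕ} (hN : (N.factorial : k) ≠ 0)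
    (h : ∀ l, ∃ r : Polynomial (MvPolynomial V k), r.natDegree ≤ N ∧
      s.genericSolution (C r.leadingCoeff) ≠ 0 ∧
      s.genericSolution (Polynomial.aeval (X l) r) = 0) :
    s.genericSolution s.jacobian ≠ 0 := by
  intro hJ
  have hdet : ((Matrix.of fun j l => pderiv l (s.equation j)).map s.genericSolution).det = 0 :=
    (RingHom.map_det s.genericSolution.toRingHom _).symm.trans hJ
  obtain ⟨v, hv0, hv⟩ := Matrix.exists_mulVec_eq_zero_iff.2 hdet
  obtain ⟨l, hl⟩ := Function.ne_iff.1 hv0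
  obtain ⟨r, hrN, hlead, hr⟩ := h l
  have hder (q : Polynomial (MvPolynomial V k))
      (hq : s.genericSolution (Polynomial.aeval (X l) q) = 0) :
      s.genericSolution (Polynomial.aeval (X l) (Polynomial.derivative q)) = 0 := by
    have htangent := sum_mul_genericSolution_pderiv_eq_zero (v := v)
      (fun j => by simpa [Matrix.mulVec, dotProduct, mul_comm] using congrFun hv j) hq
    simp only [Derivation.map_aeval, smul_eq_mul, map_mul, pderiv_X] at htangent
    rw [Finset.sum_eq_single l (fun i _ hi => by simp [hi.symm]) (by simp)] at htangent
    simpa [show v l ≠ 0 from hl] using htangent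
  have heval (q : Polynomial (MvPolynomial V k)) :
      q.eval₂ (s.genericSolution.toRingHom.comp C) (s.genericSolution (X l)) =
        s.genericSolution (Polynomial.aeval (X l) q) := by
    rw [Polynomial.aeval_def, algebraMap_eq]
    exact (Polynomial.hom_eval₂ q C s.genericSolution.toRingHom (X l)).symm
  have hmap := map_eq_zero_of_forall_eval₂_iterate_derivative
    (φ := s.genericSolution.toRingHom.comp C) (x := s.genericSolution (X l))
    (by simpa using (map_ne_zero_iff _ (algebraMap k s.GenericRing).injective).2 hN) hrN
    fun m => (heval _).trans <| by
      induction m with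
      | zero => exact hr
      | succ m ih => rw [Function.iterate_succ_apply']; exact hder _ ih
  exact hlead (by simpa [Polynomial.coeff_map] using congrArg (Polynomial.coeff · r.natDegree) hmap)

end PivotedSystem

end Jacobian

end GenericSolution

section Certificate

open MvPolynomial

lemma totalDegree_pderiv_le {R σ : Type*} [CommSemiring R] (l : σ) (f : MvPolynomial σ R) :
    (pderiv l f).totalDegree ≤ f.totalDegree := by
  classical
  conv_lhs => rw [f.as_sum, map_sum]
  refine totalDegree_finsetSum_le fun m hm => ?_
  rw [pderiv_monomial]
  exact (totalDegree_monomial_le _ _).trans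
    ((Finsupp.degree_mono tsub_le_self).trans (le_totalDegree hm))

lemma exists_eq_X_pow_mul_and_coeff_zero_ne_zero {A : Type*} [CommRing A] {r : Polynomial A}
    (hr : r ≠ 0) : ∃ (a : ℕ) (q : Polynomial A), r = Polynomial.X ^ a * q ∧ q.coeff 0 ≠ 0 := by
  obtain ⟨q, hrq, hq⟩ := Polynomial.exists_eq_pow_rootMultiplicity_mul_and_not_dvd r hr 0
  rw [Polynomial.C_0, sub_zero] at hrq hq
  exact ⟨_, q, hrq, fun h => hq (Polynomial.X_dvd_iff.2 h)⟩

namespace PivotedSystem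

variable {k σ V : Type*} [Field k] (s : PivotedSystem k σ σ V) [Fintype V]

lemma totalDegree_equation_le (j : σ) : (s.equation j).totalDegree ≤ s.deg j :=
  totalDegree_finsetSum_le fun v _ =>
    (totalDegree_C_mul_map_le _ _ _).trans (s.totalDegree_form_le j v)

lemma pderiv_equation_mem_coeffsIn (j l : σ) :
    pderiv l (s.equation j) ∈ coeffsIn σ (restrictTotalDegree V k 1) := by
  intro m
  rw [equation, map_sum, coeff_sum]
  refine sum_mem fun v _ => ?_
  rw [pderiv_C_mul, pderiv_map, coeff_C_mul, coeff_map, mem_restrictTotalDegree]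
  exact (totalDegree_mul _ _).trans (by rw [totalDegree_C, totalDegree_X])

variable [Fintype σ]

lemma exists_relation_X [Infinite k] (l : σ) :
    ∃ r : Polynomial (MvPolynomial V k), r ≠ 0 ∧ r.natDegree ≤ ∏ j, s.deg j ∧
      (∀ κ, (r.coeff κ).totalDegree ≤ Fintype.card σ * ∏ j, s.deg j) ∧
      s.genericSolution (Polynomial.aeval (X l) r) = 0 := by
  obtain ⟨r, hr, hdeg, hcoeff, hr0⟩ := exists_relation s.genericSolution_equation
    s.isUnit_genericSolution_denom (H := X l) one_ne_zero (totalDegree_X l).le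
    (μ := 0) fun m => by classical rw [coeff_X]; split_ifs <;> simp
  exact ⟨r, hr, hdeg, fun κ => (hcoeff κ).trans (by simp), hr0⟩

variable [DecidableEq σ]

lemma totalDegree_jacobian_le : s.jacobian.totalDegree ≤ ∑ j, s.deg j := by
  rw [jacobian, Matrix.det_apply]
  refine totalDegree_finsetSum_le fun τ _ => (totalDegree_smul_le _ _).trans ?_
  refine (totalDegree_finsetProd _ _).trans ?_
  rw [← Equiv.sum_comp τ s.deg]
  exact Finset.sum_le_sum fun l _ =>
    (totalDegree_pderiv_le _ _).trans (s.totalDegree_equation_le _)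

lemma jacobian_mem_coeffsIn :
    s.jacobian ∈ coeffsIn σ (restrictTotalDegree V k (Fintype.card σ)) := by
  rw [jacobian, Matrix.det_apply]
  refine sum_mem fun τ _ => ?_
  rw [Units.smul_def]
  refine zsmul_mem ?_ _
  have hprod := SetLike.prod_mem_graded (fun N => coeffsIn σ (restrictTotalDegree V k N))
    (F := Finset.univ) (fun _ => 1) _ fun l _ => s.pderiv_equation_mem_coeffsIn (τ l) l
  simpa using hprod

/-- The polynomial whose nonvanishing locus consists of the points at which `denom` is invertible
and the system is étale. -/
noncomputable def etaleDenom : MvPolynomial σ (MvPolynomial V k) :=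
  map C s.denom * s.jacobian

lemma totalDegree_etaleDenom_le :
    s.etaleDenom.totalDegree ≤ s.denom.totalDegree + ∑ j, s.deg j :=
  (totalDegree_mul _ _).trans
    (add_le_add (totalDegree_map_le _ _) s.totalDegree_jacobian_le)

lemma totalDegree_coeff_etaleDenom_le (m : σ →₀ ℕ) :
    (coeff m s.etaleDenom).totalDegree ≤ Fintype.card σ := by
  have hdenom : map C s.denom ∈ coeffsIn σ (restrictTotalDegree V k 0) := fun m => by
    rw [coeff_map, mem_restrictTotalDegree, totalDegree_C]
  have hmul := SetLike.mul_mem_graded (A := fun N => coeffsIn σ (restrictTotalDegree V k N))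
    hdenom s.jacobian_mem_coeffsIn m
  rwa [zero_add, mem_restrictTotalDegree] at hmul

/-- Where `P` does not vanish, the unknowns are integral over the coefficients, and so is the
inverse of `etaleDenom`: the leading coefficients of equations for the former divide `P`, as does
the constant coefficient of an equation for `etaleDenom`. -/
structure IsCertificate (P : MvPolynomial V k) : Prop where
  exists_relation_X : ∀ l, ∃ r : Polynomial (MvPolynomial V k),
    s.genericSolution (Polynomial.aeval (X l) r) = 0 ∧ r.leadingCoeff ∣ P
  exists_relation_etaleDenom : ∃ r : Polynomial (MvPolynomial V k),
    s.genericSolution (Polynomial.aeval s.etaleDenom r) = 0 ∧ r.coeff 0 ∣ P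

variable [Infinite k]

lemma exists_relation_etaleDenom (h : s.genericSolution s.etaleDenom ≠ 0) :
    ∃ r : Polynomial (MvPolynomial V k), r.coeff 0 ≠ 0 ∧
      (r.coeff 0).totalDegree ≤ Fintype.card σ * ((∏ j, s.deg j) *
        (s.denom.totalDegree + ∑ j, s.deg j + 1)) + (∏ j, s.deg j) * Fintype.card σ ∧
      s.genericSolution (Polynomial.aeval s.etaleDenom r) = 0 := by
  obtain ⟨r, hr, -, hcoeff, hr0⟩ := exists_relation s.genericSolution_equation
    s.isUnit_genericSolution_denom (Nat.succ_ne_zero _)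
    (s.totalDegree_etaleDenom_le.trans (Nat.le_succ _)) s.totalDegree_coeff_etaleDenom_le
  obtain ⟨a, q, rfl, hq⟩ := exists_eq_X_pow_mul_and_coeff_zero_ne_zero hr
  refine ⟨q, hq, ?_, ?_⟩
  · simpa only [Polynomial.coeff_X_pow_mul] using hcoeff (0 + a)
  · rw [map_mul, map_pow, Polynomial.aeval_X, map_mul, map_pow] at hr0
    exact (mul_eq_zero.1 hr0).resolve_left (pow_ne_zero _ h)

/-- In the first alternative, the system has no solutions where `P` does not vanish. -/
theorem exists_certificate (hchar : ((∏ j, s.deg j).factorial : k) ≠ 0) :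
    ∃ P : MvPolynomial V k, P ≠ 0 ∧
      P.totalDegree ≤ Fintype.card σ * (∏ j, s.deg j) *
        (Fintype.card σ + (s.denom.totalDegree + ∑ j, s.deg j + 1) + 1) ∧
      (s.genericSolution (C P) = 0 ∨ s.IsCertificate P) := by
  choose r hr hdeg hcoeff hr0 using s.exists_relation_X
  by_cases hlead : ∃ l, s.genericSolution (C (r l).leadingCoeff) = 0
  · obtain ⟨l, hl⟩ := hlead
    exact ⟨_, Polynomial.leadingCoeff_ne_zero.2 (hr l),
      (hcoeff l _).trans (Nat.le_mul_of_pos_right _ (Nat.succ_pos _)), .inl hl⟩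
  push Not at hlead
  have hJ := genericSolution_jacobian_ne_zero hchar fun l => ⟨r l, hdeg l, hlead l, hr0 l⟩
  obtain ⟨q, hq, hqdeg, hq0⟩ := s.exists_relation_etaleDenom <| by
    rw [etaleDenom, map_mul]
    exact mul_ne_zero s.isUnit_genericSolution_denom.ne_zero hJ
  refine ⟨(∏ l, (r l).leadingCoeff) * q.coeff 0, mul_ne_zero (Finset.prod_ne_zero_iff.2 fun l _ =>
    Polynomial.leadingCoeff_ne_zero.2 (hr l)) hq, ?_, .inr
      ⟨fun l => ⟨r l, hr0 l, (Finset.dvd_prod_of_mem _ (Finset.mem_univ l)).mul_right _⟩,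
        q, hq0, dvd_mul_left _ _⟩⟩
  have hprod : (∏ l, (r l).leadingCoeff).totalDegree ≤
      Fintype.card σ * (Fintype.card σ * ∏ j, s.deg j) :=
    (totalDegree_finsetProd _ _).trans (Finset.sum_le_card_nsmul _ _ _ fun l _ => hcoeff l _)
  calc _ ≤ _ := totalDegree_mul _ _
    _ ≤ _ := add_le_add hprod hqdeg
    _ = _ := by ring

end PivotedSystem

end Certificate

section EtaleLocus

open MvPolynomial TensorProduct

/-- The coordinate ring of the locus `{x | G x = 0, H x ≠ 0}` in affine space over `R`. -/
abbrev LocusRing {R σ : Type*} [CommRing R] (G : σ → MvPolynomial σ R) (H : MvPolynomial σ R) :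
    Type _ :=
  Localization.Away (Ideal.Quotient.mk (Ideal.span (Set.range G)) H)

namespace LocusRing

variable {R σ : Type*} [CommRing R] (G : σ → MvPolynomial σ R) (H : MvPolynomial σ R)

/-- The restriction of a polynomial function to the locus. -/
noncomputable def restrict : MvPolynomial σ R →ₐ[R] LocusRing G H :=
  (IsScalarTower.toAlgHom R (MvPolynomial σ R ⧸ Ideal.span (Set.range G)) _).comp
    (Ideal.Quotient.mkₐ R _)

lemma restrict_eq_zero (j : σ) : restrict G H (G j) = 0 := by
  have hmem : Ideal.Quotient.mk (Ideal.span (Set.range G)) (G j) = 0 :=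
    Ideal.Quotient.eq_zero_iff_mem.2 (Ideal.subset_span ⟨j, rfl⟩)
  exact (congrArg (algebraMap _ (LocusRing G H)) hmem).trans (map_zero _)

lemma isUnit_restrict : IsUnit (restrict G H H) :=
  IsLocalization.Away.algebraMap_isUnit (Ideal.Quotient.mk (Ideal.span (Set.range G)) H)

variable {G H}

lemma aeval_map_restrict {K : Type*} [CommRing K] [Algebra R K] (f : LocusRing G H →ₐ[R] K)
    (q : MvPolynomial σ R) : aeval (fun l => f (restrict G H (X l))) q = f (restrict G H q) :=
  (DFunLike.congr_fun (aeval_unique (f.comp (restrict G H))) q).symm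

lemma algHom_ext_X {K : Type*} [CommRing K] [Algebra R K] {f g : LocusRing G H →ₐ[R] K}
    (h : ∀ l, f (restrict G H (X l)) = g (restrict G H (X l))) : f = g :=
  IsLocalization.algHom_ext (Submonoid.powers (Ideal.Quotient.mk (Ideal.span (Set.range G)) H))
    (Ideal.Quotient.algHom_ext _ (MvPolynomial.algHom_ext h))

lemma exists_algHom_restrict_eq {K : Type*} [CommRing K] [Algebra R K] {x : σ → K}
    (hG : ∀ j, aeval x (G j) = 0) (hH : IsUnit (aeval x H)) :
    ∃ f : LocusRing G H →ₐ[R] K, ∀ l, f (restrict G H (X l)) = x l := by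
  let f₀ : MvPolynomial σ R ⧸ Ideal.span (Set.range G) →ₐ[R] K :=
    Ideal.Quotient.liftₐ _ (aeval x) fun a ha =>
      (Ideal.span_le (I := RingHom.ker (aeval x))).2 (Set.range_subset_iff.2 hG) ha
  have hf₀ (y : Submonoid.powers (Ideal.Quotient.mk (Ideal.span (Set.range G)) H)) :
      IsUnit (f₀ y) := by
    obtain ⟨_, N, rfl⟩ := y
    rw [map_pow]
    exact hH.pow N
  exact ⟨IsLocalization.liftAlgHom hf₀, fun l => (IsLocalization.lift_eq hf₀ _).trans (aeval_X x l)⟩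

/-- The points of the locus with coordinates in `K`. -/
noncomputable def algHomEquiv {K : Type*} [CommRing K] [Algebra R K] :
    (LocusRing G H →ₐ[R] K) ≃ {x : σ → K // (∀ j, aeval x (G j) = 0) ∧ IsUnit (aeval x H)} :=
  Equiv.ofBijective
    (fun f => ⟨fun l => f (restrict G H (X l)),
      fun j => by rw [aeval_map_restrict, restrict_eq_zero, map_zero],
      by rw [aeval_map_restrict]; exact (isUnit_restrict G H).map f⟩)
    ⟨fun _ _ h => algHom_ext_X fun l => congrFun (congrArg Subtype.val h) l, fun x =>
      (exists_algHom_restrict_eq x.2.1 x.2.2).imp fun _ hf => Subtype.ext (funext hf)⟩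

theorem etale [Fintype σ] [DecidableEq σ]
    (hJ : (Matrix.of fun j l => pderiv l (G j)).det ∣ H) : Algebra.Etale R (LocusRing G H) := by
  let P : Algebra.PreSubmersivePresentation R (MvPolynomial σ R ⧸ Ideal.span (Set.range G)) σ σ :=
    .naive (v := G) id Function.injective_id
  let Q : Algebra.PreSubmersivePresentation _ (LocusRing G H) Unit Unit :=
    .localizationAway _ (Ideal.Quotient.mk (Ideal.span (Set.range G)) H)
  have hP : IsUnit (algebraMap _ (LocusRing G H) P.jacobian) := by
    have hmatrix : P.jacobiMatrix = (Matrix.of fun j l => pderiv l (G j)).transpose := by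
      ext1 i j
      exact Algebra.PreSubmersivePresentation.jacobiMatrix_naive ..
    rw [P.jacobian_eq_jacobiMatrix_det, hmatrix, Matrix.det_transpose]
    exact isUnit_of_dvd_unit (map_dvd (restrict G H) hJ) (isUnit_restrict G H)
  have hQP : IsUnit (Q.comp P).jacobian := by
    rw [Algebra.PreSubmersivePresentation.comp_jacobian_eq_jacobian_smul_jacobian,
      Algebra.PreSubmersivePresentation.localizationAway_jacobian, Algebra.smul_def]
    exact hP.mul (isUnit_restrict G H)
  have : Algebra.IsStandardSmoothOfRelativeDimension 0 R (LocusRing G H) :=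
    Algebra.SubmersivePresentation.isStandardSmoothOfRelativeDimension ⟨Q.comp P, hQP⟩
      (by simp [Algebra.Presentation.dimension])
  infer_instance

lemma finite_of_isIntegral [Finite σ] (hX : ∀ l, IsIntegral R (restrict G H (X l)))
    {w : LocusRing G H} (hwH : w * restrict G H H = 1) (hw : IsIntegral R w) :
    Module.Finite R (LocusRing G H) := by
  have hrestrict (q : MvPolynomial σ R) : IsIntegral R (restrict G H q) := by
    induction q using MvPolynomial.induction_on with
    | C a => exact (restrict G H).commutes a ▸ isIntegral_algebraMap
    | add p q hp hq => exact map_add (restrict G H) p q ▸ hp.add hq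
    | mul_X p l hp => exact map_mul (restrict G H) p (X l) ▸ hp.mul (hX l)
  have : Algebra.IsIntegral R (LocusRing G H) := ⟨fun z => by
    obtain ⟨N, a, hz⟩ := IsLocalization.Away.surj
      (Ideal.Quotient.mk (Ideal.span (Set.range G)) H) z
    obtain ⟨q, rfl⟩ := Ideal.Quotient.mk_surjective a
    have hzq : z = w ^ N * restrict G H q := by
      change z * restrict G H H ^ N = restrict G H q at hz
      rw [← hz, mul_left_comm, ← mul_pow, hwH, one_pow, mul_one]
    rw [hzq]
    exact (hw.pow N).mul (hrestrict q)⟩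
  have hquotient : Algebra.FiniteType R (MvPolynomial σ R ⧸ Ideal.span (Set.range G)) :=
    inferInstance
  have : Algebra.FiniteType R (LocusRing G H) := hquotient.trans
    (IsLocalization.finiteType_of_monoid_fg
      (Submonoid.powers (Ideal.Quotient.mk (Ideal.span (Set.range G)) H)) _)
  exact Algebra.IsIntegral.finite

end LocusRing

lemma card_algHom_eq_finrank {K A : Type*} [Field K] [IsAlgClosed K] [CommRing A] [Algebra K A]
    [Algebra.Etale K A] [Module.Finite K A] :
    Finite (A →ₐ[K] K) ∧ Nat.card (A →ₐ[K] K) = Module.finrank K A := by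
  have : IsArtinianRing A := IsArtinianRing.of_finite K A
  have := Fintype.ofFinite (PrimeSpectrum A)
  have e := Algebra.IsFiniteSplit.algHomEquivPrimeSpectrum K A
  have hfinrank := (Algebra.FormallyEtale.equivPiOfIsSepClosed K A).toLinearEquiv.finrank_eq
  exact ⟨.of_equiv _ e.symm, by
    rw [Nat.card_congr e, hfinrank, Module.finrank_pi, Nat.card_eq_fintype_card]⟩

theorem card_algHom_eq_rankAtStalk_bot {R B : Type*} [CommRing R] [IsDomain R] [CommRing B]
    [Algebra R B] [Algebra.Etale R B] [Module.Finite R B] (K : Type*) [Field K] [IsAlgClosed K]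
    [Algebra R K] :
    Finite (B →ₐ[R] K) ∧ Nat.card (B →ₐ[R] K) = Module.rankAtStalk (R := R) B ⊥ := by
  have e := Algebra.TensorProduct.liftEquivRight R K B K
  obtain ⟨hfinite, hcard⟩ := card_algHom_eq_finrank (K := K) (A := K ⊗[R] B)
  have : Module.Flat R B := Algebra.Smooth.flat R B
  have hbase := Module.rankAtStalk_baseChange (R := R) (M := B) (S := K) ⊥
  rw [Module.rankAtStalk_eq_finrank_of_free] at hbase
  refine ⟨.of_equiv _ e.symm, ?_⟩
  rw [Nat.card_congr e, hcard, Module.rankAtStalk_eq_of_le_of_finite_of_flat (R := R) B (p := ⊥)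
    (q := PrimeSpectrum.comap (algebraMap R K) ⊥) bot_le, ← hbase]
  rfl

end EtaleLocus

section SolutionCount

open MvPolynomial

section Integral

variable {A R B : Type*} [CommRing A] [CommRing R] [CommRing B] [Algebra A R] [Algebra R B]
  [Algebra A B] [IsScalarTower A R B]

lemma isIntegral_of_isUnit_leadingCoeff {b : B} {r : Polynomial A}
    (hr : Polynomial.aeval b r = 0) (hlead : IsUnit (algebraMap A R r.leadingCoeff)) :
    IsIntegral R b := by
  obtain ⟨c, hc⟩ := hlead.exists_left_inv
  have hb : b = c • r.leadingCoeff • b := by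
    rw [← algebraMap_smul R r.leadingCoeff b, smul_smul, hc, one_smul]
  rw [hb]
  exact ((isIntegral_leadingCoeff_smul r b hr).tower_top).smul c

lemma isIntegral_of_mul_eq_one_of_isUnit_coeff_zero [Nontrivial R] {w b : B} (hwb : w * b = 1)
    {r : Polynomial A} (hr : Polynomial.aeval b r = 0)
    (hcoeff : IsUnit (algebraMap A R (r.coeff 0))) : IsIntegral R w := by
  have hcoeff0 : r.coeff 0 ≠ 0 := fun h => hcoeff.ne_zero (h ▸ map_zero _)
  let _ : Invertible b := ⟨w, hwb, (mul_comm b w).trans hwb⟩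
  refine isIntegral_of_isUnit_leadingCoeff (r := r.reverse)
    ((Polynomial.eval₂_reverse_eq_zero_iff (algebraMap A B) b r).2 hr) ?_
  rwa [Polynomial.reverse_leadingCoeff, Polynomial.trailingCoeff,
    Polynomial.natTrailingDegree_eq_zero.2 (.inr hcoeff0)]

end Integral

namespace PivotedSystem

section SolutionSet

variable {k ι σ V : Type*} [Field k]

lemma exists_form_eq_and_aeval_denom_ne_zero [Finite ι] [Finite V]
    {form : ι → V → MvPolynomial σ k} {x : σ → k}
    (h : ∀ j, ∃ v, aeval x (form j v) ≠ 0 ∧ ∀ l, l ≠ j → form l v = 0) :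
    ∃ s : PivotedSystem k ι σ V, s.form = form ∧ aeval x s.denom ≠ 0 := by
  cases nonempty_fintype ι
  cases nonempty_fintype V
  choose pivot hne hzero using h
  have hdenom : aeval x (∏ j, form j (pivot j)) ≠ 0 := by
    rw [map_prod]
    exact Finset.prod_ne_zero_iff.2 fun j _ => hne j
  exact ⟨{ form, pivot
           form_pivot_of_ne := fun hlj => hzero _ _ hlj
           denom := ∏ j, form j (pivot j)
           denom_ne_zero := fun h => hdenom (by rw [h, map_zero])
           form_pivot_dvd := fun j => Finset.dvd_prod_of_mem _ (Finset.mem_univ j)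
           deg := fun j => ∑ v, (form j v).totalDegree + 1
           deg_ne_zero := fun j => Nat.succ_ne_zero _
           totalDegree_form_le := fun j v =>
             (Finset.single_le_sum (f := fun v => (form j v).totalDegree)
               (fun _ _ => Nat.zero_le _) (Finset.mem_univ v)).trans (Nat.le_succ _) },
    rfl, hdenom⟩

variable (s : PivotedSystem k ι σ V)

/-- The points at which every equation can be solved for one of the coefficients which occur in no
other equation. In contrast to the locus `denom ≠ 0`, this does not depend on the pivots. -/
def pivotableLocus : Set (σ → k) :=
  {x | ∀ j, ∃ v, aeval x (s.form j v) ≠ 0 ∧ ∀ l, l ≠ j → s.form l v = 0}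

lemma mem_pivotableLocus_of_aeval_denom_ne_zero {x : σ → k} (hx : aeval x s.denom ≠ 0) :
    x ∈ s.pivotableLocus := fun j =>
  ⟨s.pivot j, ne_zero_of_dvd_ne_zero hx (map_dvd (aeval x) (s.form_pivot_dvd j)),
    fun _ => s.form_pivot_of_ne⟩

variable [Fintype V]

/-- The solutions, in the pivotable locus, of the system with coefficients `p`. -/
def solutionSet (p : V → k) : Set (σ → k) :=
  {x ∈ s.pivotableLocus | ∀ j, ∑ v, p v * aeval x (s.form j v) = 0}

variable {s} [Finite ι] {p : V → k} {x : σ → k}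

/-- Pivots which are invertible at `x` lead to another generic solution, which specializes to `x`
and satisfies the same relations. -/
lemma aevalTower_eq_zero_of_mem_solutionSet (hx : x ∈ s.solutionSet p)
    {a : MvPolynomial σ (MvPolynomial V k)} (ha : s.genericSolution a = 0) :
    aevalTower (aeval p) x a = 0 := by
  obtain ⟨t, ht, htx⟩ := exists_form_eq_and_aeval_denom_ne_zero hx.1
  have hequation (j) : t.equation j = s.equation j := by simp only [equation, ht]
  have hta : t.genericSolution a = 0 :=
    eq_zero_of_genericSolution_eq_zero (f := t.genericSolution.toRingHom)
      (fun j => hequation j ▸ t.genericSolution_equation j)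
      (mem_nonZeroDivisors_of_ne_zero (t.genericSolution_map_C_ne_zero s.denom_ne_zero)) ha
  exact aevalTower_eq_zero_of_genericSolution_eq_zero (fun j => ht ▸ hx.2 j) htx hta

lemma solutionSet_eq_empty {P : MvPolynomial V k} (hP : s.genericSolution (C P) = 0)
    (hp : aeval p P ≠ 0) : s.solutionSet p = ∅ :=
  Set.eq_empty_of_forall_notMem fun x hx =>
    hp (by simpa using aevalTower_eq_zero_of_mem_solutionSet hx hP)

end SolutionSet

variable {k σ V : Type*} [Field k] (s : PivotedSystem k σ σ V) [Fintype V] [Fintype σ]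
  [DecidableEq σ]

section EtaleLocusRing

variable (R : Type*) [CommRing R] [Algebra (MvPolynomial V k) R]

/-- The coordinate ring, over an algebra `R` over the ring of coefficients, of the locus of
solutions of the system at which it is étale. -/
abbrev EtaleLocusRing : Type _ :=
  LocusRing (fun j => map (algebraMap (MvPolynomial V k) R) (s.equation j))
    (map (algebraMap (MvPolynomial V k) R) s.etaleDenom)

instance : Algebra.Etale R (s.EtaleLocusRing R) := by
  refine LocusRing.etale ?_
  have hdet : (Matrix.of fun j l => pderiv l (map (algebraMap (MvPolynomial V k) R)
      (s.equation j))).det = map (algebraMap (MvPolynomial V k) R) s.jacobian := by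
    rw [jacobian, RingHom.map_det]
    exact congrArg Matrix.det (Matrix.ext fun _ _ => pderiv_map)
  rw [hdet, etaleDenom, map_mul]
  exact dvd_mul_left _ _

/-- The universal solution of the system in its étale locus. -/
noncomputable def universalSolution :
    MvPolynomial σ (MvPolynomial V k) →ₐ[MvPolynomial V k] s.EtaleLocusRing R :=
  ((LocusRing.restrict _ _).restrictScalars (MvPolynomial V k)).comp
    (mapAlgHom (Algebra.ofId (MvPolynomial V k) R))

lemma universalSolution_apply (a : MvPolynomial σ (MvPolynomial V k)) :
    s.universalSolution R a = LocusRing.restrict _ _ (map (algebraMap _ R) a) :=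
  rfl

variable {s} in
lemma universalSolution_eq_zero {a : MvPolynomial σ (MvPolynomial V k)}
    (ha : s.genericSolution a = 0) : s.universalSolution R a = 0 := by
  refine eq_zero_of_genericSolution_eq_zero (f := (s.universalSolution R).toRingHom)
    (LocusRing.restrict_eq_zero _ _) (IsUnit.mem_nonZeroDivisors ?_) ha
  exact isUnit_of_dvd_unit (map_dvd (s.universalSolution R) (dvd_mul_right _ s.jacobian))
    (LocusRing.isUnit_restrict _ _)

variable {s R} in
lemma IsCertificate.finite_etaleLocusRing [Nontrivial R] {P : MvPolynomial V k}
    (h : s.IsCertificate P) (hP : IsUnit (algebraMap _ R P)) :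
    Module.Finite R (s.EtaleLocusRing R) := by
  have hunit {a : MvPolynomial V k} (ha : a ∣ P) : IsUnit (algebraMap _ R a) :=
    isUnit_of_dvd_unit (map_dvd _ ha) hP
  have hrelation {b} {r : Polynomial (MvPolynomial V k)}
      (hr : s.genericSolution (Polynomial.aeval b r) = 0) :
      Polynomial.aeval (s.universalSolution R b) r = 0 := by
    rw [Polynomial.aeval_algHom_apply, universalSolution_eq_zero R hr]
  obtain ⟨q, hq, hqP⟩ := h.exists_relation_etaleDenom
  obtain ⟨w, hw⟩ := (LocusRing.isUnit_restrict (fun j => map (algebraMap (MvPolynomial V k) R)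
    (s.equation j)) (map (algebraMap (MvPolynomial V k) R) s.etaleDenom)).exists_left_inv
  refine LocusRing.finite_of_isIntegral (fun l => ?_) hw
    (isIntegral_of_mul_eq_one_of_isUnit_coeff_zero hw (hrelation hq) (hunit hqP))
  obtain ⟨r, hr, hrP⟩ := h.exists_relation_X l
  have hX := hrelation hr
  rw [universalSolution_apply, map_X] at hX
  exact isIntegral_of_isUnit_leadingCoeff hX (hunit hrP)

end EtaleLocusRing

variable {s} {P : MvPolynomial V k}

lemma IsCertificate.mem_solutionSet_iff {p : V → k} {x : σ → k} (h : s.IsCertificate P)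
    (hp : aeval p P ≠ 0) : x ∈ s.solutionSet p ↔ (∀ j, aevalTower (aeval p) x (s.equation j) = 0) ∧
      aevalTower (aeval p) x s.etaleDenom ≠ 0 := by
  refine ⟨fun hx => ⟨fun j => (aevalTower_equation p x j).trans (hx.2 j), fun hzero => hp ?_⟩,
    fun hx => ⟨s.mem_pivotableLocus_of_aeval_denom_ne_zero fun hzero => hx.2 ?_,
      fun j => (aevalTower_equation p x j).symm.trans (hx.1 j)⟩⟩
  · obtain ⟨r, hr, hrP⟩ := h.exists_relation_etaleDenom
    have hr0 := (Polynomial.hom_eval₂ r C (aevalTower (aeval p) x).toRingHom _).symm.trans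
      (aevalTower_eq_zero_of_mem_solutionSet hx hr)
    have hcoeff : aeval p (r.coeff 0) = 0 := by
      simpa [hzero, Polynomial.eval₂_at_zero] using hr0
    exact zero_dvd_iff.1 (hcoeff ▸ map_dvd (aeval p) hrP)
  · rw [etaleDenom, map_mul, aevalTower_aeval_map_C, hzero, zero_mul]

lemma IsCertificate.aeval_denom_ne_zero {p : V → k} {x : σ → k} (h : s.IsCertificate P)
    (hp : aeval p P ≠ 0) (hx : x ∈ s.solutionSet p) : aeval x s.denom ≠ 0 := fun hzero =>
  ((h.mem_solutionSet_iff hp).1 hx).2 <| by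
    rw [etaleDenom, map_mul, aevalTower_aeval_map_C, hzero, zero_mul]

theorem IsCertificate.exists_ncard_solutionSet [IsAlgClosed k] (h : s.IsCertificate P)
    (hP : P ≠ 0) :
    ∃ g : ℕ, ∀ p, aeval p P ≠ 0 → (s.solutionSet p).Finite ∧ (s.solutionSet p).ncard = g := by
  let R := Localization.Away P
  have : IsDomain R :=
    IsLocalization.isDomain_localization (powers_le_nonZeroDivisors_of_noZeroDivisors hP)
  have := h.finite_etaleLocusRing (R := R) (IsLocalization.Away.algebraMap_isUnit P)
  refine ⟨Module.rankAtStalk (R := R) (s.EtaleLocusRing R) ⊥, fun p hp => ?_⟩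
  let _ : Algebra R k := (IsLocalization.Away.lift P (g := (aeval p).toRingHom) hp.isUnit).toAlgebra
  have hcomp : (algebraMap R k).comp (algebraMap (MvPolynomial V k) R) = (aeval p).toRingHom :=
    IsLocalization.Away.lift_comp P hp.isUnit
  have haeval (x : σ → k) (a) : aeval x (map (algebraMap (MvPolynomial V k) R) a) =
      aevalTower (aeval p) x a := by
    rw [aeval_def, eval₂_map, hcomp]
    rfl
  have hset : s.solutionSet p = {x | (∀ j, aeval x (map (algebraMap _ R) (s.equation j)) = 0) ∧
      IsUnit (aeval x (map (algebraMap _ R) s.etaleDenom))} := by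
    ext x
    simp only [Set.mem_ofPred_eq, haeval, isUnit_iff_ne_zero, h.mem_solutionSet_iff hp]
  obtain ⟨hfinite, hcard⟩ := card_algHom_eq_rankAtStalk_bot (R := R) (B := s.EtaleLocusRing R) k
  rw [hset, ← hcard, Nat.card_congr LocusRing.algHomEquiv]
  exact ⟨Set.finite_coe_iff.1 (.of_equiv _ LocusRing.algHomEquiv), rfl⟩

end PivotedSystem

end SolutionCount

section Dehomogenization

open MvPolynomial

lemma aeval_smul_of_isHomogeneous {R B σ : Type*} [CommSemiring R] [CommSemiring B] [Algebra R B]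
    {f : MvPolynomial σ R} {D : ℕ} (hf : f.IsHomogeneous D) (c : B) (y : σ → B) :
    aeval (c • y) f = c ^ D * aeval y f := by
  rw [aeval_def, aeval_def, eval₂_eq, eval₂_eq, Finset.mul_sum]
  refine Finset.sum_congr rfl fun m hm => ?_
  simp only [Pi.smul_apply, smul_eq_mul, mul_pow, Finset.prod_mul_distrib,
    Finset.prod_pow_eq_pow_sum]
  rw [← hf.degree_eq_sum_deg_support hm]
  ring

variable {n : ℕ}

/-- The dehomogenization `f (1, X 0, …, X (n - 1))`. -/
noncomputable def dehomogenize {R : Type*} [CommSemiring R] (f : MvPolynomial (Fin (n + 1)) R) :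
    MvPolynomial (Fin n) R :=
  aeval (Fin.cons 1 X) f

lemma aeval_dehomogenize {R B : Type*} [CommSemiring R] [CommSemiring B] [Algebra R B]
    (f : MvPolynomial (Fin (n + 1)) R) (x : Fin n → B) :
    aeval x (dehomogenize f) = aeval (Fin.cons 1 x : Fin (n + 1) → B) f := by
  rw [dehomogenize, comp_aeval_apply]
  congr 2
  exact funext fun i => i.cases (map_one _) fun l => aeval_X x l

lemma smul_cons_one_div {K : Type*} [Field K] {y : Fin (n + 1) → K} (hy : y 0 ≠ 0) :
    y 0 • (Fin.cons 1 fun l => y l.succ / y 0 : Fin (n + 1) → K) = y :=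
  funext fun i => i.cases (mul_one _) fun l => mul_div_cancel₀ (y l.succ) hy

lemma aeval_eq_pow_mul_aeval_dehomogenize {R K : Type*} [CommSemiring R] [Field K] [Algebra R K]
    {f : MvPolynomial (Fin (n + 1)) R} {D : ℕ} (hf : f.IsHomogeneous D) {y : Fin (n + 1) → K}
    (hy : y 0 ≠ 0) :
    aeval y f = y 0 ^ D * aeval (fun l => y l.succ / y 0) (dehomogenize f) := by
  rw [aeval_dehomogenize, ← aeval_smul_of_isHomogeneous hf, smul_cons_one_div hy]

lemma dehomogenize_eq_zero_iff {R : Type*} [CommRing R] [IsDomain R]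
    {f : MvPolynomial (Fin (n + 1)) R} {D : ℕ} (hf : f.IsHomogeneous D) :
    dehomogenize f = 0 ↔ f = 0 := by
  refine ⟨fun h => ?_, fun h => by rw [h, dehomogenize, map_zero]⟩
  let K := FractionRing (MvPolynomial (Fin (n + 1)) R)
  have hinj : Function.Injective (algebraMap (MvPolynomial (Fin (n + 1)) R) K) :=
    IsFractionRing.injective _ _
  have hf0 := aeval_eq_pow_mul_aeval_dehomogenize hf (y := algebraMap _ K ∘ X)
    ((map_ne_zero_iff _ hinj).2 (X_ne_zero 0))
  rw [h, map_zero, mul_zero, aeval_algebraMap_apply, aeval_X_left_apply] at hf0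
  exact (map_eq_zero_iff _ hinj).1 hf0

lemma totalDegree_dehomogenize_le {R : Type*} [CommSemiring R]
    (f : MvPolynomial (Fin (n + 1)) R) : (dehomogenize f).totalDegree ≤ f.totalDegree := by
  rw [dehomogenize, aeval_def, eval₂_eq]
  refine totalDegree_finsetSum_le fun m hm => ?_
  have hX (i : Fin (n + 1)) :
      ((Fin.cons 1 X : Fin (n + 1) → MvPolynomial (Fin n) R) i).totalDegree ≤ 1 :=
    i.cases (totalDegree_one.trans_le zero_le_one) fun l =>
      (totalDegree_monomial_le _ _).trans_eq (Finsupp.degree_single l 1)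
  calc _ ≤ _ := totalDegree_mul _ _
    _ ≤ 0 + ∑ i ∈ m.support, m i :=
      add_le_add (totalDegree_C _).le <| (totalDegree_finsetProd _ _).trans <|
        Finset.sum_le_sum fun i _ => (totalDegree_pow _ _).trans <|
          (Nat.mul_le_mul_left _ (hX i)).trans_eq (mul_one _)
    _ = m.degree := zero_add _
    _ ≤ f.totalDegree := le_totalDegree hm

end Dehomogenization

section HomogeneousSystems

open MvPolynomial

namespace PivotedSystem

variable {k ι V : Type*} [Field k] {n : ℕ}

/-- A system of homogeneous equations: equation `j` has degree exactly `deg j`. Such a system can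
be considered in projective space. -/
structure IsHomogeneous (s : PivotedSystem k ι (Fin (n + 1)) V) : Prop where
  form : ∀ j v, (s.form j v).IsHomogeneous (s.deg j)
  denom : s.denom.IsHomogeneous s.denom.totalDegree

namespace IsHomogeneous

variable {s : PivotedSystem k ι (Fin (n + 1)) V}

lemma smul_mem_solutionSet_iff [Fintype V] (hs : s.IsHomogeneous) {p : V → k} {c : k}
    (hc : c ≠ 0) {y : Fin (n + 1) → k} : c • y ∈ s.solutionSet p ↔ y ∈ s.solutionSet p := by
  simp only [solutionSet, pivotableLocus, Set.mem_ofPred_eq,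
    aeval_smul_of_isHomogeneous (hs.form _ _), mul_left_comm _ (c ^ _), ← Finset.mul_sum,
    mul_eq_zero, ne_eq, pow_eq_zero_iff (s.deg_ne_zero _), hc, false_or]

variable (hs : s.IsHomogeneous)

/-- The system in the affine chart `X 0 = 1`. -/
noncomputable def affineSystem : PivotedSystem k ι (Fin n) V where
  form j v := dehomogenize (s.form j v)
  pivot := s.pivot
  form_pivot_of_ne hlj := by rw [s.form_pivot_of_ne hlj, dehomogenize, map_zero]
  denom := dehomogenize s.denom
  denom_ne_zero := (dehomogenize_eq_zero_iff hs.denom).not.2 s.denom_ne_zero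
  form_pivot_dvd j := map_dvd (aeval (Fin.cons 1 X)) (s.form_pivot_dvd j)
  deg := s.deg
  deg_ne_zero := s.deg_ne_zero
  totalDegree_form_le j v := (totalDegree_dehomogenize_le _).trans (s.totalDegree_form_le j v)

variable [Fintype V]

lemma mem_solutionSet_affineSystem_iff {p : V → k} {x : Fin n → k} :
    x ∈ hs.affineSystem.solutionSet p ↔ (Fin.cons 1 x : Fin (n + 1) → k) ∈ s.solutionSet p := by
  simp only [solutionSet, pivotableLocus, Set.mem_ofPred_eq, affineSystem, aeval_dehomogenize,
    dehomogenize_eq_zero_iff (hs.form _ _)]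

variable [Finite ι]

section Comparison

variable {K : Type*} [Field K] [Algebra k K] {q : V → K} {y : Fin (n + 1) → K}

lemma aevalTower_div_eq_zero_of_genericSolution_eq_zero
    (hy : ∀ j, ∑ v, q v * aeval y (s.form j v) = 0) (hy0 : y 0 ≠ 0) (hdenom : aeval y s.denom ≠ 0)
    {a : MvPolynomial (Fin n) (MvPolynomial V k)} (ha : hs.affineSystem.genericSolution a = 0) :
    aevalTower (aeval q : MvPolynomial V k →ₐ[k] K) (fun l => y l.succ / y 0) a = 0 := by
  refine aevalTower_eq_zero_of_genericSolution_eq_zero (fun j => ?_) ?_ ha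
  · refine (mul_eq_zero.1 ?_).resolve_left (pow_ne_zero (s.deg j) hy0)
    rw [← hy j, Finset.mul_sum]
    refine Finset.sum_congr rfl fun v _ => ?_
    rw [aeval_eq_pow_mul_aeval_dehomogenize (hs.form j v) hy0, mul_left_comm]
    rfl
  · rw [aeval_eq_pow_mul_aeval_dehomogenize hs.denom hy0] at hdenom
    exact right_ne_zero_of_mul hdenom

lemma aevalTower_genericSolution_div_eq_zero {ψ : s.GenericRing →ₐ[k] K}
    (hψ : Function.Injective ψ) {a : MvPolynomial (Fin n) (MvPolynomial V k)}
    (ha : hs.affineSystem.genericSolution a = 0) :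
    aevalTower (aeval fun v => ψ (s.genericSolution (C (X v))) : MvPolynomial V k →ₐ[k] K)
      (fun l => ψ (s.genericSolution (X l.succ)) / ψ (s.genericSolution (X 0))) a = 0 := by
  have hcomp := aevalTower_comp_X (ψ.comp s.genericSolution)
  have hform (φ : MvPolynomial (Fin (n + 1)) k) :
      aeval (fun i => ψ (s.genericSolution (X i))) φ = ψ (s.genericSolution (map C φ)) :=
    (aevalTower_aeval_map_C _ _ φ).symm.trans (DFunLike.congr_fun hcomp _)
  have hne {a : MvPolynomial (Fin (n + 1)) (MvPolynomial V k)} (ha : s.genericSolution a ≠ 0) :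
      ψ (s.genericSolution a) ≠ 0 := (map_ne_zero_iff ψ hψ).2 ha
  refine hs.aevalTower_div_eq_zero_of_genericSolution_eq_zero
    (y := fun i => ψ (s.genericSolution (X i))) (fun j => ?_) (hne (s.genericSolution_X_ne_zero 0))
    (hform _ ▸ hne (s.genericSolution_map_C_ne_zero s.denom_ne_zero)) ha
  rw [← aevalTower_equation]
  exact (DFunLike.congr_fun hcomp _).trans
    ((congrArg ψ (s.genericSolution_equation j)).trans (map_zero ψ))

end Comparison

lemma genericSolution_C_eq_zero {P : MvPolynomial V k}
    (hP : hs.affineSystem.genericSolution (C P) = 0) : s.genericSolution (C P) = 0 := by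
  let ψ := IsScalarTower.toAlgHom k s.GenericRing (FractionRing s.GenericRing)
  have hψ : Function.Injective ψ := IsFractionRing.injective _ _
  have hzero := hs.aevalTower_genericSolution_div_eq_zero hψ hP
  have hcomp := DFunLike.congr_fun (aevalTower_comp_X (ψ.comp s.genericSolution)) (C P)
  rw [aevalTower_C] at hzero hcomp
  exact (map_eq_zero_iff ψ hψ).1 (hcomp.symm.trans hzero)

lemma genericSolution_eval_scaleRoots_eq_zero {l : Fin n} {r : Polynomial (MvPolynomial V k)}
    (hr : hs.affineSystem.genericSolution (Polynomial.aeval (X l) r) = 0) :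
    s.genericSolution (((r.map C).scaleRoots (X 0)).eval (X l.succ)) = 0 := by
  let ψ := IsScalarTower.toAlgHom k s.GenericRing (FractionRing s.GenericRing)
  have hψ : Function.Injective ψ := IsFractionRing.injective _ _
  let f := (ψ.comp s.genericSolution).toRingHom
  have hX : f (X 0) ≠ 0 := (map_ne_zero_iff ψ hψ).2 (s.genericSolution_X_ne_zero 0)
  have hC : f.comp C =
      (aeval fun v => f (C (X v)) : MvPolynomial V k →ₐ[k] FractionRing s.GenericRing).toRingHom :=
    (congrArg (fun g => g.toRingHom.comp C)
      (aevalTower_comp_X (ψ.comp s.genericSolution))).symm.trans (aevalTower_comp_C _ _)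
  have hroot : (r.map C).eval₂ f (f (X l.succ) / f (X 0)) = 0 := by
    rw [Polynomial.eval₂_map, hC]
    exact (aevalTower_aeval_X _ _ l r).symm.trans (hs.aevalTower_genericSolution_div_eq_zero hψ hr)
  refine (map_eq_zero_iff ψ hψ).1 ?_
  have hscale := Polynomial.scaleRoots_eval₂_eq_zero f (s := X 0) hroot
  rwa [mul_div_cancel₀ _ hX, Polynomial.eval₂_at_apply] at hscale

lemma eq_zero_of_mem_solutionSet {p : V → k} {y : Fin (n + 1) → k} (hy : y ∈ s.solutionSet p)
    (hy0 : y 0 = 0) {l : Fin n} {r : Polynomial (MvPolynomial V k)}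
    (hr : hs.affineSystem.genericSolution (Polynomial.aeval (X l) r) = 0)
    (hp : aeval p r.leadingCoeff ≠ 0) : y l.succ = 0 := by
  let f := (aevalTower (aeval p : MvPolynomial V k →ₐ[k] k) y).toRingHom
  have hX (i) : f (X i) = y i := aevalTower_X _ y i
  have hlead : f (r.map C).leadingCoeff = aeval p r.leadingCoeff := by
    rw [Polynomial.leadingCoeff_map_of_injective (C_injective _ _)]
    exact aevalTower_C _ y _
  have hzero : f (((r.map C).scaleRoots (X 0)).eval (X l.succ)) = 0 :=
    aevalTower_eq_zero_of_mem_solutionSet hy (hs.genericSolution_eval_scaleRoots_eq_zero hr)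
  rw [← Polynomial.eval_map_apply, Polynomial.map_scaleRoots _ _ _ (hlead.trans_ne hp), hX, hX, hy0,
    Polynomial.scaleRoots_zero, Polynomial.eval_smul, Polynomial.eval_X_pow, smul_eq_mul,
    Polynomial.leadingCoeff_map_of_leadingCoeff_ne_zero f (hlead.trans_ne hp), hlead] at hzero
  exact eq_zero_of_pow_eq_zero ((mul_eq_zero.1 hzero).resolve_left hp)

end IsHomogeneous

end PivotedSystem

section ProjectiveSolutions

variable {k V : Type*} [Field k] {n : ℕ}

/-- The point of projective space with affine coordinates `x` in the chart `X 0 ≠ 0`. -/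
def affinePoint (x : Fin n → k) : Projectivization k (Fin (n + 1) → k) :=
  Projectivization.mk k (Fin.cons 1 x) fun h => one_ne_zero (congrFun h 0)

lemma exists_smul_cons_one_eq_rep_affinePoint (x : Fin n → k) :
    ∃ c : k, c ≠ 0 ∧ c • (Fin.cons 1 x : Fin (n + 1) → k) = (affinePoint x).rep :=
  let ⟨c, hc⟩ := Projectivization.exists_smul_eq_mk_rep k (Fin.cons 1 x : Fin (n + 1) → k) _
  ⟨c, c.ne_zero, hc⟩

lemma affinePoint_div_rep {x : Projectivization k (Fin (n + 1) → k)} (hx : x.rep 0 ≠ 0) :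
    affinePoint (fun l => x.rep l.succ / x.rep 0) = x := by
  conv_rhs => rw [← x.mk_rep]
  exact ((Projectivization.mk_eq_mk_iff' k _ _ x.rep_nonzero _).2
    ⟨x.rep 0, smul_cons_one_div hx⟩).symm

lemma affinePoint_injective : Function.Injective (affinePoint (k := k) (n := n)) := fun x y h => by
  obtain ⟨c, hc⟩ := (Projectivization.mk_eq_mk_iff' k _ _ _ _).1 h
  have hc1 : c = 1 := by simpa using congrFun hc 0
  exact (Fin.cons_right_injective (α := fun _ => k) 1 ((one_smul k _).symm.trans (hc1 ▸ hc))).symm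

namespace PivotedSystem

variable [Fintype V]

/-- The solutions, in projective space, of a homogeneous system with coefficients `p`. -/
def projectiveSolutionSet {ι : Type*} (s : PivotedSystem k ι (Fin (n + 1)) V) (p : V → k) :
    Set (Projectivization k (Fin (n + 1) → k)) :=
  {x | x.rep ∈ s.solutionSet p}

namespace IsHomogeneous

variable {s : PivotedSystem k (Fin n) (Fin (n + 1)) V} {P : MvPolynomial V k} {p : V → k}

lemma apply_zero_ne_zero_of_mem_solutionSet (hs : s.IsHomogeneous)
    (h : hs.affineSystem.IsCertificate P) (hp : aeval p P ≠ 0) {y : Fin (n + 1) → k}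
    (hy : y ∈ s.solutionSet p) (hy0 : y ≠ 0) : y 0 ≠ 0 := fun hzero =>
  hy0 <| funext fun i => i.cases hzero fun l =>
    let ⟨_, hr, hrP⟩ := h.exists_relation_X l
    hs.eq_zero_of_mem_solutionSet hy hzero hr (ne_zero_of_dvd_ne_zero hp (map_dvd _ hrP))

lemma projectiveSolutionSet_eq_image_affinePoint (hs : s.IsHomogeneous)
    (h : hs.affineSystem.IsCertificate P) (hp : aeval p P ≠ 0) :
    s.projectiveSolutionSet p = affinePoint '' hs.affineSystem.solutionSet p := by
  refine Set.Subset.antisymm (fun x hx => ?_) (Set.image_subset_iff.2 fun x hx => ?_)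
  · have hx0 := hs.apply_zero_ne_zero_of_mem_solutionSet h hp hx x.rep_nonzero
    refine ⟨_, hs.mem_solutionSet_affineSystem_iff.2 ?_, affinePoint_div_rep hx0⟩
    rwa [← hs.smul_mem_solutionSet_iff hx0, smul_cons_one_div hx0]
  · obtain ⟨c, hc, hrep⟩ := exists_smul_cons_one_eq_rep_affinePoint x
    rw [Set.mem_preimage, projectiveSolutionSet, Set.mem_ofPred_eq, ← hrep,
      hs.smul_mem_solutionSet_iff hc]
    exact hs.mem_solutionSet_affineSystem_iff.1 hx

lemma aeval_denom_ne_zero_of_mem_solutionSet (hs : s.IsHomogeneous)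
    (h : hs.affineSystem.IsCertificate P) (hp : aeval p P ≠ 0) {y : Fin (n + 1) → k}
    (hy : y ∈ s.solutionSet p) (hy0 : y 0 ≠ 0) : aeval y s.denom ≠ 0 := by
  rw [aeval_eq_pow_mul_aeval_dehomogenize hs.denom hy0]
  refine mul_ne_zero (pow_ne_zero _ hy0)
    (h.aeval_denom_ne_zero hp (hs.mem_solutionSet_affineSystem_iff.2 ?_))
  rwa [← hs.smul_mem_solutionSet_iff hy0, smul_cons_one_div hy0]

theorem exists_generic_ncard_projectiveSolutionSet [IsAlgClosed k] (hs : s.IsHomogeneous)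
    (hchar : ((∏ j, s.deg j).factorial : k) ≠ 0) :
    ∃ P : MvPolynomial V k, P ≠ 0 ∧
      P.totalDegree ≤ n * (∏ j, s.deg j) *
        (n + ((dehomogenize s.denom).totalDegree + ∑ j, s.deg j + 1) + 1) ∧
      ∃ g : ℕ, ∀ p, aeval p P ≠ 0 →
        (s.projectiveSolutionSet p).Finite ∧ (s.projectiveSolutionSet p).ncard = g ∧
          ∀ x ∈ s.projectiveSolutionSet p, x.rep 0 ≠ 0 ∧ aeval x.rep s.denom ≠ 0 := by
  obtain ⟨P, hP, hdeg, hzero | h⟩ := hs.affineSystem.exists_certificate hchar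
  all_goals rw [Fintype.card_fin] at hdeg
  · refine ⟨P, hP, hdeg, 0, fun p hp => ?_⟩
    have hempty : s.projectiveSolutionSet p = ∅ :=
      Set.eq_empty_of_forall_notMem fun x hx =>
        (solutionSet_eq_empty (hs.genericSolution_C_eq_zero hzero) hp).subset hx
    simp [hempty]
  · obtain ⟨g, hg⟩ := h.exists_ncard_solutionSet hP
    refine ⟨P, hP, hdeg, g, fun p hp => ?_⟩
    obtain ⟨hfinite, hcard⟩ := hg p hp
    have himage := hs.projectiveSolutionSet_eq_image_affinePoint h hp
    refine ⟨himage ▸ hfinite.image _, ?_, fun x hx => ?_⟩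
    · rw [himage, Set.ncard_image_of_injective _ affinePoint_injective, hcard]
    · have hx0 := hs.apply_zero_ne_zero_of_mem_solutionSet h hp hx x.rep_nonzero
      exact ⟨hx0, hs.aeval_denom_ne_zero_of_mem_solutionSet h hp hx hx0⟩

end IsHomogeneous

end PivotedSystem

end ProjectiveSolutions

end HomogeneousSystems

section Sections

open MvPolynomial

namespace PivotedSystem

section Reindex

variable {k ι ι' σ V : Type*} [Field k] (s : PivotedSystem k ι σ V)

/-- The same system with its equations indexed by another type. -/
def reindex (e : ι' ≃ ι) : PivotedSystem k ι' σ V where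
  form j := s.form (e j)
  pivot j := s.pivot (e j)
  form_pivot_of_ne hlj := s.form_pivot_of_ne (e.injective.ne hlj)
  denom := s.denom
  denom_ne_zero := s.denom_ne_zero
  form_pivot_dvd j := s.form_pivot_dvd (e j)
  deg j := s.deg (e j)
  deg_ne_zero j := s.deg_ne_zero (e j)
  totalDegree_form_le j := s.totalDegree_form_le (e j)

lemma solutionSet_reindex [Fintype V] (e : ι' ≃ ι) (p : V → k) :
    (s.reindex e).solutionSet p = s.solutionSet p := by
  ext x
  simp only [solutionSet, pivotableLocus, reindex, Set.mem_ofPred_eq, e.forall_congr_left,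
    Equiv.apply_symm_apply, ne_eq, Equiv.symm_apply_eq]

end Reindex

theorem IsHomogeneous.exists_generic_ncard_of_card_eq {k ι V : Type*} [Field k] [IsAlgClosed k]
    [Fintype ι] [Fintype V] {n : ℕ} {s : PivotedSystem k ι (Fin (n + 1)) V} (hs : s.IsHomogeneous)
    (hι : Fintype.card ι = n) (hchar : ((∏ j, s.deg j).factorial : k) ≠ 0) :
    ∃ P : MvPolynomial V k, P ≠ 0 ∧
      P.totalDegree ≤ n * (∏ j, s.deg j) *
        (n + ((dehomogenize s.denom).totalDegree + ∑ j, s.deg j + 1) + 1) ∧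
      ∃ g : ℕ, ∀ p, aeval p P ≠ 0 →
        (s.projectiveSolutionSet p).Finite ∧ (s.projectiveSolutionSet p).ncard = g ∧
          ∀ x ∈ s.projectiveSolutionSet p, x.rep 0 ≠ 0 ∧ aeval x.rep s.denom ≠ 0 := by
  let e := (Fintype.equivFinOfCardEq hι).symm
  have he : (s.reindex e).IsHomogeneous := ⟨fun j => hs.form (e j), hs.denom⟩
  have hprod : ∏ j, (s.reindex e).deg j = ∏ j, s.deg j := e.prod_comp s.deg
  have hsum : ∑ j, (s.reindex e).deg j = ∑ j, s.deg j := e.sum_comp s.deg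
  have h := he.exists_generic_ncard_projectiveSolutionSet (hprod ▸ hchar)
  simp only [projectiveSolutionSet, solutionSet_reindex, hprod, hsum] at h
  exact h

end PivotedSystem

variable {k : Type*} [Field k] {n m d a i : ℕ}

/-- The forms of the system of `a` linear equations and of `i` equations in the polynomials `F`. -/
noncomputable def sectionForm (F : Fin (m + 1) → MvPolynomial (Fin (n + 1)) k) :
    Fin a ⊕ Fin i → (Fin a × Fin (n + 1)) ⊕ (Fin i × Fin (m + 1)) → MvPolynomial (Fin (n + 1)) k
  | .inl j, .inl v => if v.1 = j then X v.2 else 0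
  | .inr j, .inr v => if v.1 = j then F v.2 else 0
  | _, _ => 0

variable {F : Fin (m + 1) → MvPolynomial (Fin (n + 1)) k}

lemma sectionForm_inl_of_ne {l : Fin a ⊕ Fin i} {j : Fin a} (h : l ≠ .inl j) (t : Fin (n + 1)) :
    sectionForm F l (.inl (j, t)) = 0 := by
  rcases l with l | l
  exacts [if_neg fun hjl => h (congrArg _ hjl.symm), rfl]

lemma sectionForm_inr_of_ne {l : Fin a ⊕ Fin i} {j : Fin i} (h : l ≠ .inr j) (t : Fin (m + 1)) :
    sectionForm F l (.inr (j, t)) = 0 := by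
  rcases l with l | l
  exacts [rfl, if_neg fun hjl => h (congrArg _ hjl.symm)]

lemma isHomogeneous_sectionForm (hF : ∀ t, (F t).IsHomogeneous d) (j : Fin a ⊕ Fin i)
    (v : (Fin a × Fin (n + 1)) ⊕ (Fin i × Fin (m + 1))) :
    (sectionForm F j v).IsHomogeneous (Sum.elim (fun _ => 1) (fun _ => d) j) := by
  rcases j with j | j <;> rcases v with v | v <;>
    simp only [sectionForm, Sum.elim_inl, Sum.elim_inr]
  · split_ifs
    exacts [isHomogeneous_X k v.2, isHomogeneous_zero _ _ _]
  · exact isHomogeneous_zero _ _ _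
  · exact isHomogeneous_zero _ _ _
  · split_ifs
    exacts [hF v.2, isHomogeneous_zero _ _ _]

/-- The system defining the intersection of `a` hyperplanes of the source and of the preimages of
`i` hyperplanes of the target under the rational map `F`. -/
noncomputable def sectionSystem (hF : ∀ t, (F t).IsHomogeneous d) (hF0 : F 0 ≠ 0)
    (hd : d ≠ 0 ∨ i = 0) : PivotedSystem k (Fin a ⊕ Fin i) (Fin (n + 1))
      ((Fin a × Fin (n + 1)) ⊕ (Fin i × Fin (m + 1))) where
  form := sectionForm F
  pivot := Sum.elim (fun j => .inl (j, 0)) fun j => .inr (j, 0)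
  form_pivot_of_ne {_ j} hlj := by
    rcases j with j | j
    exacts [sectionForm_inl_of_ne hlj 0, sectionForm_inr_of_ne hlj 0]
  denom := X 0 * F 0
  denom_ne_zero := mul_ne_zero (X_ne_zero 0) hF0
  form_pivot_dvd := by rintro (_ | _) <;> simp [sectionForm]
  deg := Sum.elim (fun _ => 1) fun _ => d
  deg_ne_zero := by
    rintro (_ | j)
    exacts [one_ne_zero, hd.resolve_right fun h => (h ▸ j).elim0]
  totalDegree_form_le j v := (isHomogeneous_sectionForm hF j v).totalDegree_le

section SectionSystem

variable (hF : ∀ t, (F t).IsHomogeneous d) (hF0 : F 0 ≠ 0) (hd : d ≠ 0 ∨ i = 0)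

lemma isHomogeneous_sectionSystem : (sectionSystem (a := a) hF hF0 hd).IsHomogeneous where
  form := isHomogeneous_sectionForm hF
  denom := by
    have hdenom : (X 0 * F 0).IsHomogeneous (1 + d) := (isHomogeneous_X k 0).mul (hF 0)
    exact (hdenom.totalDegree (mul_ne_zero (X_ne_zero 0) hF0)).symm ▸ hdenom

lemma totalDegree_dehomogenize_denom_sectionSystem_le :
    (dehomogenize (sectionSystem (a := a) hF hF0 hd).denom).totalDegree ≤ d := by
  have hdenom : dehomogenize (sectionSystem (a := a) hF hF0 hd).denom = dehomogenize (F 0) := by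
    simp [sectionSystem, dehomogenize]
  rw [hdenom]
  exact (totalDegree_dehomogenize_le _).trans (hF 0).totalDegree_le

lemma prod_deg_sectionSystem : ∏ j, (sectionSystem (a := a) hF hF0 hd).deg j = d ^ i := by
  simp [sectionSystem]

lemma sum_deg_sectionSystem : ∑ j, (sectionSystem (a := a) hF hF0 hd).deg j = a + i * d := by
  simp [sectionSystem]

lemma forall_sum_mul_sectionForm_eq_zero_iff {l : Fin a → Fin (n + 1) → k}
    {lhat : Fin i → Fin (m + 1) → k} {y : Fin (n + 1) → k} :
    (∀ j, ∑ v, (Sum.elim (fun q => l q.1 q.2) fun q => lhat q.1 q.2 : _ → k) v *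
      aeval y (sectionForm F j v) = 0) ↔
        (∀ j, ∑ t, l j t * y t = 0) ∧ ∀ j, ∑ t, lhat j t * eval y (F t) = 0 := by
  simp [sectionForm, Fintype.sum_prod_type_right, apply_ite (eval y)]

lemma mem_pivotableLocus_sectionSystem {y : Fin (n + 1) → k} (hy : y ≠ 0)
    (hFy : ∃ t, eval y (F t) ≠ 0) : y ∈ (sectionSystem (a := a) hF hF0 hd).pivotableLocus := by
  obtain ⟨t, ht⟩ := Function.ne_iff.1 hy
  obtain ⟨t', ht'⟩ := hFy
  rintro (j | j)
  · exact ⟨.inl (j, t), by simpa [sectionSystem, sectionForm] using ht,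
      fun _ hl => sectionForm_inl_of_ne hl t⟩
  · exact ⟨.inr (j, t'), by simpa [sectionSystem, sectionForm] using ht',
      fun _ hl => sectionForm_inr_of_ne hl t'⟩

lemma projectiveSolutionSet_sectionSystem {l : Fin a → Fin (n + 1) → k}
    {lhat : Fin i → Fin (m + 1) → k}
    (hdenom : ∀ x ∈ (sectionSystem hF hF0 hd).projectiveSolutionSet
      (Sum.elim (fun q => l q.1 q.2) fun q => lhat q.1 q.2),
        aeval x.rep (sectionSystem (a := a) hF hF0 hd).denom ≠ 0) :
    (sectionSystem hF hF0 hd).projectiveSolutionSet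
      (Sum.elim (fun q => l q.1 q.2) fun q => lhat q.1 q.2) =
        {x | (∀ j, ∑ t, l j t * x.rep t = 0) ∧ (∀ j, ∑ t, lhat j t * eval x.rep (F t) = 0) ∧
          ¬ ∀ t, eval x.rep (F t) = 0} := by
  ext x
  refine ⟨fun hx => ?_, fun ⟨hl, hlhat, hFx⟩ => ?_⟩
  · obtain ⟨hl, hlhat⟩ := forall_sum_mul_sectionForm_eq_zero_iff.1 hx.2
    refine ⟨hl, hlhat, fun hFx => hdenom x hx ?_⟩
    exact (map_mul (aeval x.rep) _ _).trans (mul_eq_zero_of_right _ (hFx 0))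
  · exact ⟨mem_pivotableLocus_sectionSystem hF hF0 hd x.rep_nonzero (not_forall.1 hFx),
      forall_sum_mul_sectionForm_eq_zero_iff.2 ⟨hl, hlhat⟩⟩

end SectionSystem

end Sections

section ProjectiveDegree

open MvPolynomial

lemma mul_pow_mul_le_mul_two_pow_mul_pow {n d i e : ℕ} (hin : i ≤ n) (he : e ≤ d) :
    n * d ^ i * (n + (e + (n - i + i * d) + 1) + 1) ≤ (n + 1) * 2 ^ n * (d + 1) ^ (i + 1) := by
  have hn : n + 1 ≤ 2 ^ n := Nat.lt_two_pow_self
  have hn' : 2 * n ≤ 2 ^ n := by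
    rcases n with - | n
    · simp
    · rw [pow_succ']
      exact Nat.mul_le_mul_left 2 Nat.lt_two_pow_self
  have hd : d ^ (i + 1) + (i + 1) * d ^ i ≤ (d + 1) ^ (i + 1) := by
    simpa using pow_add_mul_le_add_pow_of_sq_nonneg (a := d) (b := 1) (Nat.zero_le _)
      (Nat.zero_le _) (Nat.zero_le _) (Nat.zero_le _) (i + 1)
  calc n * d ^ i * (n + (e + (n - i + i * d) + 1) + 1)
      ≤ n * d ^ i * ((i + 1) * d + 2 * (n + 1)) := Nat.mul_le_mul_left _ (by lia)
    _ = d ^ i * (n * (i + 1) * d + (n + 1) * (2 * n)) := by ring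
    _ ≤ d ^ i * ((n + 1) * 2 ^ n * d + (n + 1) * 2 ^ n * (i + 1)) := by
      refine Nat.mul_le_mul_left _ (Nat.add_le_add (Nat.mul_le_mul_right d ?_) ?_)
      · exact Nat.mul_le_mul n.le_succ ((Nat.succ_le_succ hin).trans hn)
      · exact (Nat.mul_le_mul_left _ hn').trans (Nat.le_mul_of_pos_right _ i.succ_pos)
    _ = (n + 1) * 2 ^ n * (d ^ (i + 1) + (i + 1) * d ^ i) := by ring
    _ ≤ (n + 1) * 2 ^ n * (d + 1) ^ (i + 1) := Nat.mul_le_mul_left _ hd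

lemma natCast_factorial_pow_ne_zero {k : Type*} [Field k] {d n i : ℕ}
    (hchar : ringChar k = 0 ∨ d ^ n < ringChar k) (hin : i ≤ n) :
    ((d ^ i).factorial : k) ≠ 0 := by
  rcases d.eq_zero_or_pos with rfl | hd
  · rcases i with - | i <;> simp
  refine (IsUnit.natCast_factorial_of_le ?_ (Nat.pow_le_pow_right hd hin)).ne_zero
  rcases CharP.char_is_prime_or_zero k (ringChar k) with hp | hzero
  · have := Fact.mk hp
    exact (IsUnit.natCast_factorial_iff_of_charP _).2 (hchar.resolve_left hp.ne_zero)
  · have := (CharP.ringChar_zero_iff_CharZero k).1 hzero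
    exact IsUnit.natCast_factorial_of_algebra k _

variable {k : Type*} [Field k] {n m d a i : ℕ} {F : Fin (m + 1) → MvPolynomial (Fin (n + 1)) k}

lemma exists_eval_ne_zero_of_degree_eq_zero (hF : ∀ t, (F t).IsHomogeneous 0) (hF0 : F 0 ≠ 0)
    (j : Fin i) :
    ∃ P : MvPolynomial ((Fin a × Fin (n + 1)) ⊕ (Fin i × Fin (m + 1))) k,
      P ≠ 0 ∧ P.totalDegree ≤ 1 ∧ ∀ q y, eval q P = ∑ t, q (.inr (j, t)) * eval y (F t) := by
  have hconst (t) : F t = C (coeff 0 (F t)) :=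
    totalDegree_eq_zero_iff_eq_C.1 (Nat.le_zero.1 (hF t).totalDegree_le)
  have heval (t y) : eval y (F t) = coeff 0 (F t) := by rw [hconst, eval_C, coeff_C, if_pos rfl]
  have hP (q y) : eval q (∑ t, X (.inr (j, t)) * C (coeff 0 (F t)) :
      MvPolynomial ((Fin a × Fin (n + 1)) ⊕ (Fin i × Fin (m + 1))) k) =
        ∑ t, q (.inr (j, t)) * eval y (F t) := by
    simp only [map_sum, map_mul, eval_X, eval_C, heval]
  refine ⟨_, fun h => hF0 ?_, totalDegree_finsetSum_le fun t _ => ?_, hP⟩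
  · have hzero := hP (Sum.elim 0 fun v => if v.2 = 0 then 1 else 0) 0
    rw [h, map_zero] at hzero
    simp only [heval, Sum.elim_inr, ite_mul, one_mul, zero_mul, Finset.sum_ite_eq',
      Finset.mem_univ, if_true] at hzero
    rw [hconst, ← hzero, map_zero]
  · exact (totalDegree_mul _ _).trans (by simp)

theorem projective_degree_explicit_general [IsAlgClosed k] (hF : ∀ t, (F t).IsHomogeneous d)
    (hF0 : F 0 ≠ 0) (hin : i ≤ n) (hchar : ((d ^ i).factorial : k) ≠ 0) :
    ∃ (P : MvPolynomial ((Fin (n - i) × Fin (n + 1)) ⊕ (Fin i × Fin (m + 1))) k) (g : ℕ),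
      P ≠ 0 ∧ P.totalDegree ≤ (n + 1) * 2 ^ n * (d + 1) ^ (i + 1) ∧
      ∀ (l : Fin (n - i) → Fin (n + 1) → k) (lhat : Fin i → Fin (m + 1) → k),
        eval (Sum.elim (fun p => l p.1 p.2) (fun p => lhat p.1 p.2)) P ≠ 0 →
        let S : Set (Projectivization k (Fin (n + 1) → k)) :=
          {x | (∀ j, ∑ t, l j t * x.rep t = 0) ∧ (∀ j, ∑ t, lhat j t * eval x.rep (F t) = 0) ∧
            ¬ ∀ t, eval x.rep (F t) = 0}
        S.Finite ∧ S.ncard = g ∧ ∀ x ∈ S, x.rep 0 ≠ 0 := by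
  by_cases hd : d ≠ 0 ∨ i = 0
  · obtain ⟨P, hP, hdeg, g, hg⟩ :=
      (isHomogeneous_sectionSystem (a := n - i) hF hF0 hd).exists_generic_ncard_of_card_eq
        (by simp [hin]) (by rwa [prod_deg_sectionSystem])
    rw [prod_deg_sectionSystem, sum_deg_sectionSystem] at hdeg
    refine ⟨P, g, hP, hdeg.trans (mul_pow_mul_le_mul_two_pow_mul_pow hin
      (totalDegree_dehomogenize_denom_sectionSystem_le hF hF0 hd)), fun l lhat hne => ?_⟩
    obtain ⟨hfinite, hcard, hx⟩ := hg _ hne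
    rw [← projectiveSolutionSet_sectionSystem hF hF0 hd fun x hxS => (hx x hxS).2]
    exact ⟨hfinite, hcard, fun x hxS => (hx x hxS).1⟩
  · obtain ⟨rfl, hi⟩ := not_or.1 hd |>.imp_left not_not.1
    obtain ⟨P, hP, hdeg, hPeval⟩ :=
      exists_eval_ne_zero_of_degree_eq_zero hF hF0 ⟨0, Nat.pos_of_ne_zero hi⟩
    refine ⟨P, 0, hP, hdeg.trans (Nat.one_le_iff_ne_zero.2 (by positivity)), fun l lhat hne => ?_⟩
    intro S
    have hS : S = ∅ := Set.eq_empty_of_forall_notMem fun x hx =>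
      hne ((hPeval _ x.rep).trans (hx.2.1 ⟨0, Nat.pos_of_ne_zero hi⟩))
    simp [hS]

end ProjectiveDegree

/-- **Proposition A.9** (explicit construction of projective degrees).
Let `k` be an algebraically closed field of characteristic `0` or `> d^n`, let
`F_0, …, F_m` be homogeneous of common degree `d` in `k[X_0,…,X_n]` with `F_0 ≠ 0`, and let
`i ≤ min(m,n)`.  Then there is a nonzero polynomial `P` in the variables `L, L̂`, of total
degree at most `(m+n+1)·2^n·(d+1)^(m+1)`, and a natural number `g_i`, such that whenever
`P(ℓ, ℓ̂) ≠ 0`, the set of points `x ∈ ℙ^n(k)` satisfying the `n-i` linear equations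
`ℓ_j(x) = 0`, the `i` equations `ℓ̂_{j,0}F_0(x) + ⋯ + ℓ̂_{j,m}F_m(x) = 0` and
`x ∉ V(F_0,…,F_m)` is finite with exactly `g_i` elements, and all its points
satisfy `x_0 ≠ 0`. -/
theorem projective_degree_explicit
    (k : Type*) [Field k] [IsAlgClosed k]
    (n m d : ℕ)
    (hchar : ringChar k = 0 ∨ d ^ n < ringChar k)
    (F : Fin (m + 1) → MvPolynomial (Fin (n + 1)) k)
    (hFhom : ∀ j, (F j).IsHomogeneous d)
    (hF0 : F 0 ≠ 0)
    (i : ℕ) (him : i ≤ m) (hin : i ≤ n) :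
    ∃ (P : MvPolynomial ((Fin (n - i) × Fin (n + 1)) ⊕ (Fin i × Fin (m + 1))) k) (g : ℕ),
      P ≠ 0 ∧
      P.totalDegree ≤ (m + n + 1) * 2 ^ n * (d + 1) ^ (m + 1) ∧
      ∀ (l : Fin (n - i) → Fin (n + 1) → k) (lhat : Fin i → Fin (m + 1) → k),
        MvPolynomial.eval (Sum.elim (fun p => l p.1 p.2) (fun p => lhat p.1 p.2)) P ≠ 0 →
        let S : Set (Projectivization k (Fin (n + 1) → k)) :=
          {x | (∀ j : Fin (n - i), ∑ t, l j t * x.rep t = 0) ∧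
               (∀ j : Fin i, ∑ t, lhat j t * MvPolynomial.eval x.rep (F t) = 0) ∧
               ¬ (∀ t : Fin (m + 1), MvPolynomial.eval x.rep (F t) = 0)}
        S.Finite ∧ S.ncard = g ∧ ∀ x ∈ S, x.rep 0 ≠ 0 := by
  obtain ⟨P, g, hP, hdeg, h⟩ :=
    projective_degree_explicit_general hFhom hF0 hin (natCast_factorial_pow_ne_zero hchar hin)
  refine ⟨P, g, hP, hdeg.trans (Nat.mul_le_mul (Nat.mul_le_mul_right _ ?_) ?_), h⟩
  · lia
  · exact Nat.pow_le_pow_right d.succ_pos (Nat.succ_le_succ him)
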